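/- For all ε > 0 there exists L > 0 with the following property. For any finite nonempty set A ⊆ 𝔽₂ⁿ (any n), writing η for the real number defined by |A+A| = |A|^{2−η}, there exists a subspace V ⊆ 𝔽₂ⁿ such that |V| ≤ |A|^L and 𝔼_{a∼𝐔_A} log |A ∩ (V + a)| ≥ (η − ε) log |A|, where 𝐔_A is uniformly distributed on A. -/

import Mathlib

open Real Pointwise

noncomputable section

abbrev Fvec (n : ℕ) : Type := Fin n → ZMod 2

/-- Shannon entropy (natural log) of a finitely supported distribution. -/
def ent {A : Type*} (p : A → ℝ) : ℝ := ∑ᶠ a, Real.negMulLog (p a)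

/-- `p` is a (finitely supported) probability distribution. -/
def IsDist {A : Type*} (p : A → ℝ) : Prop := (∀ a, 0 ≤ p a) ∧ ∑ᶠ a, p a = 1

/-- Pushforward of a distribution along a map: the distribution of `f(X)` for `X ∼ p`. -/
def push {A B : Type*} (f : A → B) (p : A → ℝ) : B → ℝ := fun b => ∑ᶠ a ∈ f ⁻¹' {b}, p a

/-- Joint distribution of a pair of independent random variables. -/
def prodDist {A B : Type*} (p : A → ℝ) (q : B → ℝ) : A × B → ℝ := fun z => p z.1 * q z.2

/-- Distribution of `X + Y` for independent `X ∼ p`, `Y ∼ q`. -/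
def conv {A : Type*} [AddGroup A] (p q : A → ℝ) : A → ℝ := fun z => ∑ᶠ x, p x * q (z - x)

/-- The distribution of `X` conditioned on `U = b`, where `r` is the joint distribution of `(X, U)`. -/
def fiber {A B : Type*} (r : A × B → ℝ) (b : B) : A → ℝ := fun a => r (a, b) / push Prod.snd r b

/-- Conditional entropy `H[X | U]` of a joint distribution `r` of `(X, U)`. -/
def condEnt {A B : Type*} (r : A × B → ℝ) : ℝ := ∑ᶠ b, push Prod.snd r b * ent (fiber r b)

/-- Doubling mass `s[X ; Y]` (of independent copies with distributions `p`, `q`). -/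
def sDouble {A : Type*} [AddGroup A] (p q : A → ℝ) : ℝ := ent p + ent q - ent (conv p q)

/-- Conditional doubling mass `s[X | U ; Y | W] = 𝔼_{u ∼ U, w ∼ W} s[X_u ; Y_w]`,
where `r1`, `r2` are the joint distributions of `(X, U)` and `(Y, W)`. -/
def sCond {A U W : Type*} [AddGroup A] (r1 : A × U → ℝ) (r2 : A × W → ℝ) : ℝ :=
  ∑ᶠ u, ∑ᶠ w, push Prod.snd r1 u * push Prod.snd r2 w * sDouble (fiber r1 u) (fiber r2 w)

/-- Conditional mutual information `I[A : B | S]` of a joint distribution of `(A, B, S)`. -/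
def condMI {A B S : Type*} (r : A × B × S → ℝ) : ℝ :=
  ent (push (fun z => (z.1, z.2.2)) r) + ent (push (fun z => z.2) r)
    - ent r - ent (push (fun z => z.2.2) r)

/-- Uniform distribution on a set. -/
def unifOn {A : Type*} (s : Set A) : A → ℝ := s.indicator fun _ => (Nat.card s : ℝ)⁻¹

/-- Entropic Ruzsa distance `d[X ; Y]`. -/
def dRuzsa {A : Type*} [AddGroup A] (p q : A → ℝ) : ℝ := ent (conv p q) - ent p / 2 - ent q / 2

/-- Joint distribution of `(X, X + Y)` for independent `X ∼ p`, `Y ∼ q`. -/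
def jointSum {A : Type*} [AddGroup A] (p q : A → ℝ) : A × A → ℝ :=
  push (fun z : A × A => (z.1, z.1 + z.2)) (prodDist p q)

/-- Joint distribution of `(X, π_V(X))`. -/
def selfProj {n : ℕ} (V : Submodule (ZMod 2) (Fvec n)) (p : Fvec n → ℝ) :
    Fvec n × (Fvec n ⧸ V) → ℝ := push (fun x => (x, V.mkQ x)) p

/-- Joint distribution of independent `(X₁, X₂, Y₁, Y₂)` with `X₁, X₂ ∼ p` and `Y₁, Y₂ ∼ q`. -/
def quad {A : Type*} (p q : A → ℝ) : A × A × A × A → ℝ :=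
  fun z => p z.1 * p z.2.1 * q z.2.2.1 * q z.2.2.2

/-- Distribution of `X₁ + ⋯ + X_k` for independent `Xᵢ ∼ p i`. -/
def indepSum {A : Type*} [AddCommGroup A] (k : ℕ) (p : Fin k → A → ℝ) : A → ℝ :=
  push (fun x : Fin k → A => ∑ i, x i) (fun x => ∏ i, p i (x i))

/-- Statement `A(η, L, c)` from the paper. -/
def StA (η L c : ℝ) : Prop :=
  ∀ (n : ℕ) (p q : Fvec n → ℝ), IsDist p → IsDist q →
    ent (conv p q) ≤ (1 - η) * (ent p + ent q) →
    ∃ V : Submodule (ZMod 2) (Fvec n),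
      ent (unifOn (V : Set (Fvec n))) ≤ L * (ent p + ent q) ∧
      ent (push V.mkQ p) + ent (push V.mkQ q) ≤ (1 - c) * (ent p + ent q)

/-- Statement `B(η, ε, L)` from the paper. -/
def StB (η ε L : ℝ) : Prop :=
  ∀ (n : ℕ) (p q : Fvec n → ℝ), IsDist p → IsDist q →
    ∃ V : Submodule (ZMod 2) (Fvec n),
      ent (unifOn (V : Set (Fvec n))) ≤ L * (ent p + ent q) ∧
      ent (conv (push V.mkQ p) (push V.mkQ q)) ≥
        (1 - η) * (ent (push V.mkQ p) + ent (push V.mkQ q)) - ε * (ent p + ent q)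


namespace PF

set_option linter.unusedSectionVars false

section core
variable {α β γ δ Ω : Type*} [Fintype α] [Fintype β] [Fintype γ] [Fintype δ] [Fintype Ω]

/-- finite probability distribution -/
def IsD (p : α → ℝ) : Prop := (∀ a, 0 ≤ p a) ∧ ∑ a, p a = 1

open Classical in
/-- push-forward -/
def mp (f : α → β) (p : α → ℝ) : β → ℝ := fun b => ∑ a, if f a = b then p a else 0

/-- entropy -/
def En (p : α → ℝ) : ℝ := ∑ a, negMulLog (p a)

/-- product distribution -/
def pr (p : α → ℝ) (q : β → ℝ) : α × β → ℝ := fun z => p z.1 * q z.2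

theorem mp_sum (f : α → β) (p : α → ℝ) (F : β → ℝ) :
    ∑ b, mp f p b * F b = ∑ a, p a * F (f a) := by
  classical
  unfold mp
  simp_rw [Finset.sum_mul]
  rw [Finset.sum_comm]
  refine Finset.sum_congr rfl fun a _ => ?_
  simp

theorem mp_apply_inj (f : α → β) (hf : Function.Injective f) (p : α → ℝ) (a : α) :
    mp f p (f a) = p a := by
  classical
  unfold mp
  rw [Finset.sum_eq_single a]
  · simp
  · intro b _ hb
    rw [if_neg]
    exact fun h => hb (hf h)
  · simp

theorem IsD.mp {p : α → ℝ} (hp : IsD p) (f : α → β) : IsD (mp f p) := by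
  constructor
  · intro b
    unfold PF.mp
    refine Finset.sum_nonneg fun a _ => ?_
    split_ifs
    · exact hp.1 a
    · exact le_rfl
  · have := mp_sum f p (fun _ => 1)
    simpa [hp.2] using this

theorem IsD.pr {p : α → ℝ} {q : β → ℝ} (hp : IsD p) (hq : IsD q) : IsD (pr p q) := by
  constructor
  · intro z
    exact mul_nonneg (hp.1 _) (hq.1 _)
  · unfold PF.pr
    rw [Fintype.sum_prod_type]
    simp_rw [← Finset.mul_sum, hq.2, mul_one, hp.2]

theorem IsD.le_one {p : α → ℝ} (hp : IsD p) (a : α) : p a ≤ 1 := by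
  rw [← hp.2]
  exact Finset.single_le_sum (f := p) (fun b _ => hp.1 b) (Finset.mem_univ a)

theorem mp_mp (f : α → β) (g : β → γ) (p : α → ℝ) : mp g (mp f p) = mp (fun a => g (f a)) p := by
  classical
  funext c
  have := mp_sum f p (fun b => if g b = c then 1 else 0)
  unfold mp at *
  simpa using this

theorem mp_id (p : α → ℝ) : mp (fun a => a) p = p := by
  funext a
  exact mp_apply_inj (fun a => a) (fun _ _ h => h) p a

theorem mp_pr {α' β' : Type*} [Fintype α'] [Fintype β'] (f : α → α') (g : β → β')
    (p : α → ℝ) (q : β → ℝ) :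
    mp (fun z : α × β => (f z.1, g z.2)) (pr p q) = pr (mp f p) (mp g q) := by
  classical
  funext z
  unfold mp pr
  rw [Fintype.sum_prod_type, Finset.sum_mul_sum]
  refine Finset.sum_congr rfl fun a _ => Finset.sum_congr rfl fun b _ => ?_
  rcases z with ⟨x, y⟩
  by_cases h1 : f a = x <;> by_cases h2 : g b = y <;> simp [h1, h2]

theorem mp_fst_pr (p : α → ℝ) (q : β → ℝ) (hq : IsD q) : mp Prod.fst (pr p q) = p := by
  classical
  funext a
  unfold mp pr
  rw [Fintype.sum_prod_type]
  rw [Finset.sum_eq_single a]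
  · simp [← Finset.mul_sum, hq.2]
  · intro b _ hb
    simp [hb]
  · simp

theorem mp_snd_pr (p : α → ℝ) (q : β → ℝ) (hp : IsD p) : mp Prod.snd (pr p q) = q := by
  classical
  funext a
  unfold mp pr
  rw [Fintype.sum_prod_type_right]
  rw [Finset.sum_eq_single a]
  · simp [← Finset.sum_mul, hp.2]
  · intro b _ hb
    simp [hb]
  · simp

theorem mp_of_equiv (e : α ≃ β) (p : α → ℝ) (q : β → ℝ) (h : ∀ a, q (e a) = p a) (X : β → γ) :
    mp X q = mp (fun a => X (e a)) p := by
  classical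
  funext c
  unfold mp
  rw [← e.sum_comp]
  simp [h]

theorem En_nonneg {p : α → ℝ} (hp : IsD p) : 0 ≤ En p :=
  Finset.sum_nonneg fun a _ => negMulLog_nonneg (hp.1 a) (hp.le_one a)

theorem En_eq (p : α → ℝ) : En p = - ∑ a, p a * log (p a) := by
  unfold En negMulLog
  rw [← Finset.sum_neg_distrib]
  simp

theorem En_pr {p : α → ℝ} {q : β → ℝ} (hp : IsD p) (hq : IsD q) :
    En (pr p q) = En p + En q := by
  unfold En pr
  rw [Fintype.sum_prod_type]
  simp_rw [negMulLog_mul, Finset.sum_add_distrib, ← Finset.mul_sum, ← Finset.sum_mul, hq.2]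
  simp [hp.2]

theorem mp_ge {p : α → ℝ} (hp : IsD p) (f : α → β) (a : α) : p a ≤ mp f p (f a) := by
  classical
  unfold mp
  have := Finset.single_le_sum (f := fun x => if f x = f a then p x else 0)
    (fun b _ => by split_ifs <;> simp [hp.1 b]) (Finset.mem_univ a)
  simpa using this

theorem En_mp_eq (f : α → β) (p : α → ℝ) : En (mp f p) = - ∑ a, p a * log (mp f p (f a)) := by
  rw [En_eq, mp_sum f p (fun b => log (mp f p b))]

theorem En_mp_le {p : α → ℝ} (hp : IsD p) (f : α → β) : En (mp f p) ≤ En p := by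
  rw [En_mp_eq, En_eq]
  refine neg_le_neg (Finset.sum_le_sum fun a _ => ?_)
  rcases (hp.1 a).eq_or_lt with h | h
  · rw [← h]; simp
  · exact mul_le_mul_of_nonneg_left (log_le_log h (mp_ge hp f a)) h.le

theorem En_le_of {p : Ω → ℝ} (hp : IsD p) {X : Ω → α} {Y : Ω → β} (f : β → α)
    (h : ∀ w, X w = f (Y w)) : En (mp X p) ≤ En (mp Y p) := by
  have : mp X p = mp f (mp Y p) := by
    rw [mp_mp]; congr 1; funext w; exact h w
  rw [this]
  exact En_mp_le (hp.mp Y) f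

theorem En_eq_of {p : Ω → ℝ} (hp : IsD p) {X : Ω → α} {Y : Ω → β} (f : β → α) (g : α → β)
    (h : ∀ w, X w = f (Y w)) (h' : ∀ w, Y w = g (X w)) : En (mp X p) = En (mp Y p) :=
  le_antisymm (En_le_of hp f h) (En_le_of hp g h')

/-- basic submodularity -/
theorem submod {p : Ω → ℝ} (hp : IsD p) (X : Ω → α) (Y : Ω → β) (Z : Ω → γ) :
    En (mp (fun w => (X w, Y w, Z w)) p) + En (mp Z p) ≤
      En (mp (fun w => (X w, Z w)) p) + En (mp (fun w => (Y w, Z w)) p) := by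
  classical
  set P := mp (fun w => (X w, Y w, Z w)) p with hP
  have hPd : IsD P := hp.mp _
  have e1 : mp Z p = mp (fun z : α × β × γ => z.2.2) P := by rw [hP, mp_mp]
  have e2 : mp (fun w => (X w, Z w)) p = mp (fun z : α × β × γ => (z.1, z.2.2)) P := by
    rw [hP, mp_mp]
  have e3 : mp (fun w => (Y w, Z w)) p = mp (fun z : α × β × γ => z.2) P := by rw [hP, mp_mp]
  rw [e1, e2, e3]
  clear_value P
  rw [En_mp_eq, En_mp_eq, En_mp_eq, En_eq]
  set A := mp (fun z : α × β × γ => (z.1, z.2.2)) P with hA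
  set B := mp (fun z : α × β × γ => z.2) P with hB
  set C := mp (fun z : α × β × γ => z.2.2) P with hC
  have hAd : IsD A := hPd.mp _
  have hBd : IsD B := hPd.mp _
  have hCd : IsD C := hPd.mp _
  have key : ∀ z : α × β × γ, P z * (log (A (z.1, z.2.2)) + log (B z.2) - log (P z) - log (C z.2.2))
      ≤ A (z.1, z.2.2) * B z.2 / C z.2.2 - P z := by
    intro z
    rcases (hPd.1 z).eq_or_lt with h | h
    · rw [← h]; simp only [zero_mul, sub_zero]
      exact div_nonneg (mul_nonneg (hAd.1 _) (hBd.1 _)) (hCd.1 _)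
    · have hA0 : 0 < A (z.1, z.2.2) := h.trans_le (mp_ge hPd (fun z : α × β × γ => (z.1, z.2.2)) z)
      have hB0 : 0 < B z.2 := h.trans_le (mp_ge hPd (fun z : α × β × γ => z.2) z)
      have hC0 : 0 < C z.2.2 := h.trans_le (mp_ge hPd (fun z : α × β × γ => z.2.2) z)
      have := log_le_sub_one_of_pos (x := A (z.1, z.2.2) * B z.2 / (P z * C z.2.2)) (by positivity)
      rw [log_div (by positivity) (by positivity), log_mul hA0.ne' hB0.ne',
        log_mul h.ne' hC0.ne'] at this
      calc _ ≤ P z * (A (z.1, z.2.2) * B z.2 / (P z * C z.2.2) - 1) := by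
              apply mul_le_mul_of_nonneg_left _ h.le; linarith
        _ = _ := by field_simp
  have hsum : ∑ z : α × β × γ, A (z.1, z.2.2) * B z.2 / C z.2.2 ≤ 1 := by
    have hCA : ∀ c, ∑ a, A (a, c) = C c := by
      intro c
      have : C = mp (fun y : α × γ => y.2) A := by rw [hA, mp_mp]
      rw [this]
      unfold mp
      rw [Fintype.sum_prod_type_right, Finset.sum_eq_single c]
      · simp
      · intro b _ hb; simp [hb]
      · simp
    rw [Fintype.sum_prod_type_right]
    calc _ = ∑ y : β × γ, C y.2 * B y / C y.2 := by
            refine Finset.sum_congr rfl fun y _ => ?_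
            simp only [← Finset.sum_div, ← Finset.sum_mul, hCA]
      _ ≤ ∑ y : β × γ, B y := by
            refine Finset.sum_le_sum fun y _ => ?_
            by_cases h : C y.2 = 0
            · rw [h]; simp [hBd.1 y]
            · rw [mul_div_assoc, mul_div_cancel₀]; exact h
      _ = 1 := hBd.2
  have := Finset.sum_le_sum (fun z (_ : z ∈ (Finset.univ : Finset (α × β × γ))) => key z)
  rw [Finset.sum_sub_distrib, hPd.2] at this
  simp only [mul_sub, mul_add, Finset.sum_sub_distrib, Finset.sum_add_distrib] at this
  linarith

theorem subadd {p : Ω → ℝ} (hp : IsD p) (X : Ω → α) (Y : Ω → β) :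
    En (mp (fun w => (X w, Y w)) p) ≤ En (mp X p) + En (mp Y p) := by
  have h := submod hp X Y (fun _ => ())
  have e1 : En (mp (fun w => (X w, Y w, ())) p) = En (mp (fun w => (X w, Y w)) p) :=
    En_eq_of hp (fun z => (z.1, z.2, ())) (fun z => (z.1, z.2.1)) (fun _ => rfl) (fun _ => rfl)
  have e2 : En (mp (fun w => (X w, ())) p) = En (mp X p) :=
    En_eq_of hp (fun z => (z, ())) (fun z => z.1) (fun _ => rfl) (fun _ => rfl)
  have e3 : En (mp (fun w => (Y w, ())) p) = En (mp Y p) :=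
    En_eq_of hp (fun z => (z, ())) (fun z => z.1) (fun _ => rfl) (fun _ => rfl)
  have := En_nonneg (hp.mp (fun _ => ()))
  linarith

/-- weights of a family -/
def wt (r : α × β → ℝ) : β → ℝ := mp Prod.snd r

/-- fibre of a family -/
def fb (r : α × β → ℝ) (w : β) : α → ℝ := fun a => r (a, w) / wt r w

theorem wt_eq (r : α × β → ℝ) (w : β) : wt r w = ∑ a, r (a, w) := by
  classical
  unfold wt mp
  rw [Fintype.sum_prod_type_right, Finset.sum_eq_single w]
  · simp
  · intro b _ hb; simp [hb]
  · simp

theorem IsD.wt {r : α × β → ℝ} (hr : IsD r) : IsD (wt r) := hr.mp _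

theorem IsD.fb {r : α × β → ℝ} (hr : IsD r) {w : β} (hw : 0 < PF.wt r w) : IsD (fb r w) := by
  constructor
  · intro a
    exact div_nonneg (hr.1 _) hw.le
  · unfold PF.fb
    rw [← Finset.sum_div, ← wt_eq, div_self hw.ne']

theorem fam_En {r : α × β → ℝ} (hr : IsD r) :
    ∑ w, wt r w * En (fb r w) = En r - En (wt r) := by
  have h : ∀ w, wt r w * En (fb r w) = ∑ a, negMulLog (r (a, w)) - negMulLog (wt r w) := by
    intro w
    unfold En
    by_cases h0 : wt r w = 0
    · have : ∀ a, r (a, w) = 0 := by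
        intro a
        have h1 := wt_eq r w
        rw [h0] at h1
        exact (Finset.sum_eq_zero_iff_of_nonneg (fun a _ => hr.1 (a, w))).1 h1.symm a
          (Finset.mem_univ a)
      simp [h0, this]
    · rw [Finset.mul_sum]
      have : ∀ a, wt r w * negMulLog (fb r w a) = negMulLog (r (a, w)) + r (a, w) * log (wt r w) := by
        intro a
        unfold fb negMulLog
        by_cases h1 : r (a, w) = 0
        · simp [h1]
        · rw [log_div h1 h0]; field_simp; ring
      rw [Finset.sum_congr rfl fun a _ => this a, Finset.sum_add_distrib, ← Finset.sum_mul, ← wt_eq]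
      unfold negMulLog; ring
  rw [Finset.sum_congr rfl fun w _ => h w, Finset.sum_sub_distrib]
  unfold En
  rw [Fintype.sum_prod_type_right]

theorem wt_map {α' : Type*} [Fintype α'] (f : α → α') (r : α × β → ℝ) :
    wt (mp (fun z : α × β => (f z.1, z.2)) r) = wt r := by
  unfold wt; rw [mp_mp]

theorem fb_map {α' : Type*} [Fintype α'] (f : α → α') (r : α × β → ℝ) (w : β) :
    fb (mp (fun z : α × β => (f z.1, z.2)) r) w = mp f (fb r w) := by
  classical
  funext a
  unfold fb
  rw [wt_map]
  unfold mp
  rw [Fintype.sum_prod_type_right, Finset.sum_eq_single w]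
  · simp only [Prod.mk.injEq, and_true]
    rw [Finset.sum_div]
    exact Finset.sum_congr rfl fun b _ => by split_ifs <;> simp
  · intro b _ hb; simp [hb]
  · simp

theorem exists_of_avg {w f : α → ℝ} (hw : IsD w) {c : ℝ} (h : c ≤ ∑ a, w a * f a) :
    ∃ a, 0 < w a ∧ c ≤ f a := by
  by_contra hcon
  push Not at hcon
  have h1 : ∀ a, w a * f a ≤ w a * c := by
    intro a
    rcases (hw.1 a).eq_or_lt with h | h
    · rw [← h]; simp
    · exact mul_le_mul_of_nonneg_left (hcon a h).le h.le
  have : ∃ a, 0 < w a := by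
    by_contra hn
    push Not at hn
    have := hw.2
    rw [Finset.sum_eq_zero fun a _ => le_antisymm (hn a) (hw.1 a)] at this
    simp at this
  obtain ⟨a, ha⟩ := this
  have : ∑ a, w a * f a < ∑ a, w a * c :=
    Finset.sum_lt_sum (fun a _ => h1 a) ⟨a, Finset.mem_univ a, mul_lt_mul_of_pos_left (hcon a ha) ha⟩
  rw [← Finset.sum_mul, hw.2] at this
  linarith

/-- the conditionally independent coupling -/
def cpl (r : α × β → ℝ) : α × α × β → ℝ := fun z => r (z.1, z.2.2) * r (z.2.1, z.2.2) / wt r z.2.2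

theorem r_zero {r : α × β → ℝ} (hr : IsD r) {w : β} (h0 : wt r w = 0) (a : α) : r (a, w) = 0 := by
  have h1 := wt_eq r w
  rw [h0] at h1
  exact (Finset.sum_eq_zero_iff_of_nonneg (fun a _ => hr.1 (a, w))).1 h1.symm a
    (Finset.mem_univ a)

theorem cpl_fst {r : α × β → ℝ} (hr : IsD r) :
    mp (fun z : α × α × β => (z.1, z.2.2)) (cpl r) = r := by
  classical
  funext ⟨a, w⟩
  unfold mp cpl
  rw [Fintype.sum_prod_type, Finset.sum_eq_single a]
  · rw [Fintype.sum_prod_type_right, Finset.sum_eq_single w]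
    · simp only [if_true]
      rw [← Finset.sum_div, ← Finset.mul_sum, ← wt_eq]
      by_cases h0 : wt r w = 0
      · simp [h0, r_zero hr h0]
      · field_simp
    · intro b _ hb; simp [hb]
    · simp
  · intro b _ hb; simp [hb]
  · simp

theorem cpl_snd {r : α × β → ℝ} (hr : IsD r) :
    mp (fun z : α × α × β => z.2) (cpl r) = r := by
  classical
  funext ⟨a, w⟩
  unfold mp cpl
  rw [Fintype.sum_prod_type_right, Finset.sum_eq_single (a, w)]
  · simp only [if_true]
    rw [← Finset.sum_div, ← Finset.sum_mul, ← wt_eq]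
    by_cases h0 : wt r w = 0
    · simp [h0, r_zero hr h0]
    · field_simp
  · intro b _ hb; simp [hb]
  · simp

theorem IsD.cpl {r : α × β → ℝ} (hr : IsD r) : IsD (cpl r) := by
  constructor
  · intro z
    exact div_nonneg (mul_nonneg (hr.1 _) (hr.1 _)) (hr.wt.1 _)
  · have := hr.2
    rw [← cpl_snd hr] at this
    have h2 := mp_sum (fun z : α × α × β => z.2) (PF.cpl r) (fun _ => 1)
    simp only [mul_one] at h2
    rw [← h2, this]

/-- entropy of the coupling -/
theorem En_cpl {r : α × β → ℝ} (hr : IsD r) : En (cpl r) = 2 * En r - En (wt r) := by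
  have e1 : En (wt r) = - ∑ z : α × α × β, cpl r z * log (wt r z.2.2) := by
    have : wt r = mp (fun z : α × α × β => z.2.2) (cpl r) := by
      conv_lhs => rw [← cpl_snd hr]
      unfold wt; rw [mp_mp]
    rw [this, En_mp_eq]
  have e2 : En r = - ∑ z : α × α × β, cpl r z * log (r (z.1, z.2.2)) := by
    conv_lhs => rw [← cpl_fst hr]
    rw [En_mp_eq, cpl_fst hr]
  have e3 : En r = - ∑ z : α × α × β, cpl r z * log (r z.2) := by
    conv_lhs => rw [← cpl_snd hr]
    rw [En_mp_eq, cpl_snd hr]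
  have : En (cpl r) = - ∑ z : α × α × β, (cpl r z * log (r (z.1, z.2.2)) + cpl r z * log (r z.2)
      - cpl r z * log (wt r z.2.2)) := by
    rw [En_eq]
    congr 1
    refine Finset.sum_congr rfl fun z _ => ?_
    by_cases hz : cpl r z = 0
    · simp [hz]
    · have hz' := hz
      unfold cpl at hz'
      have h1 : r (z.1, z.2.2) ≠ 0 := fun h => hz' (by simp [h])
      have h2 : r (z.2.1, z.2.2) ≠ 0 := fun h => hz' (by simp [h])
      have h3 : wt r z.2.2 ≠ 0 := fun h => hz' (by simp [h])
      have : log (cpl r z) = log (r (z.1, z.2.2)) + log (r z.2) - log (wt r z.2.2) := by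
        unfold cpl
        rw [log_div (mul_ne_zero h1 h2) h3, log_mul h1 h2]
      rw [this]; ring
  rw [this, Finset.sum_sub_distrib, Finset.sum_add_distrib]
  linarith

end core
end PF

namespace PF

set_option linter.unusedSectionVars false
set_option linter.unusedVariables false
set_option linter.unusedSimpArgs false

section grp
variable {G : Type*} [AddCommGroup G] [Fintype G]
variable {β γ β' γ' : Type*} [Fintype β] [Fintype γ] [Fintype β'] [Fintype γ']

/-- distribution of a sum of independent variables -/
def cv (p q : G → ℝ) : G → ℝ := mp (fun z : G × G => z.1 + z.2) (pr p q)

theorem IsD.cv {p q : G → ℝ} (hp : IsD p) (hq : IsD q) : IsD (cv p q) := (hp.pr hq).mp _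

theorem cv_comm (p q : G → ℝ) : cv p q = cv q p := by
  unfold cv
  rw [mp_of_equiv (Equiv.prodComm G G) (pr q p) (pr p q)
    (fun z => by simp [pr, mul_comm])]
  congr 1
  funext z
  simp [add_comm]

theorem cv_assoc (p q r : G → ℝ) : cv (cv p q) r = cv p (cv q r) := by
  have h1 : cv (cv p q) r = mp (fun z : (G × G) × G => z.1.1 + z.1.2 + z.2) (pr (pr p q) r) := by
    unfold cv
    conv_lhs => rw [← mp_id r]
    rw [← mp_pr, mp_mp]
  have h2 : cv p (cv q r) = mp (fun z : G × (G × G) => z.1 + (z.2.1 + z.2.2)) (pr p (pr q r)) := by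
    unfold cv
    conv_lhs => rw [← mp_id p]
    rw [← mp_pr, mp_mp]
  rw [h1, h2, mp_of_equiv (Equiv.prodAssoc G G G) (pr (pr p q) r) (pr p (pr q r))
    (fun z => by simp [pr, mul_assoc])]
  congr 1
  funext z
  simp [add_assoc]

theorem mp_cv (f : G →+ G) (p q : G → ℝ) : mp f (cv p q) = cv (mp f p) (mp f q) := by
  unfold cv
  rw [← mp_pr, mp_mp, mp_mp]
  congr 1
  funext z
  simp

theorem En_cv_le {p q : G → ℝ} (hp : IsD p) (hq : IsD q) : En (cv p q) ≤ En p + En q := by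
  rw [← En_pr hp hq]
  exact En_mp_le (hp.pr hq) _

theorem En_fst_pr {p : β → ℝ} {q : γ → ℝ} (hp : IsD p) (hq : IsD q) :
    En (mp (fun z : β × γ => z.1) (pr p q)) = En p := by
  rw [show mp (fun z : β × γ => z.1) (pr p q) = p from mp_fst_pr p q hq]

theorem En_snd_pr {p : β → ℝ} {q : γ → ℝ} (hp : IsD p) (hq : IsD q) :
    En (mp (fun z : β × γ => z.2) (pr p q)) = En q := by
  rw [show mp (fun z : β × γ => z.2) (pr p q) = q from mp_snd_pr p q hp]

theorem En_le_cv_left {p q : G → ℝ} (hp : IsD p) (hq : IsD q) : En p ≤ En (cv p q) := by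
  have h := subadd (hp.pr hq) (fun z : G × G => z.1 + z.2) (fun z => z.2)
  have e1 : En (mp (fun z : G × G => (z.1 + z.2, z.2)) (pr p q))
      = En (mp (fun z => z) (pr p q)) :=
    En_eq_of (hp.pr hq) (fun z : G × G => (z.1 + z.2, z.2)) (fun z => (z.1 - z.2, z.2))
      (fun _ => rfl) (fun z => by simp)
  rw [e1, mp_id, En_pr hp hq, En_snd_pr hp hq] at h
  unfold cv
  linarith

theorem En_le_cv_right {p q : G → ℝ} (hp : IsD p) (hq : IsD q) : En q ≤ En (cv p q) := by
  rw [cv_comm]; exact En_le_cv_left hq hp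

/-- Kaimanovich--Vershik -/
theorem KV {p q r : G → ℝ} (hp : IsD p) (hq : IsD q) (hr : IsD r) :
    En (cv (cv p q) r) + En q ≤ En (cv p q) + En (cv q r) := by
  have hd := hp.pr (hq.pr hr)
  have h := submod hd (fun z : G × G × G => z.1) (fun z => z.2.2) (fun z => z.1 + (z.2.1 + z.2.2))
  have e0 : En (mp (fun z : G × G × G => (z.1, z.2.2, z.1 + (z.2.1 + z.2.2))) (pr p (pr q r)))
      = En p + En q + En r := by
    rw [En_eq_of hd (Y := fun z => z) (fun z : G × G × G => (z.1, z.2.2, z.1 + (z.2.1 + z.2.2)))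
      (fun z => (z.1, z.2.2 - z.1 - z.2.1, z.2.1)) (fun _ => rfl)
      (fun z => by ext <;> simp), mp_id, En_pr hp (hq.pr hr), En_pr hq hr]
    ring
  have e1 : mp (fun z : G × G × G => z.1 + (z.2.1 + z.2.2)) (pr p (pr q r)) = cv p (cv q r) := by
    unfold cv
    conv_rhs => rw [← mp_id p]
    rw [← mp_pr, mp_mp]
  have e2 : En (mp (fun z : G × G × G => (z.1, z.1 + (z.2.1 + z.2.2))) (pr p (pr q r)))
      = En p + En (cv q r) := by
    rw [En_eq_of hd (Y := fun z : G × G × G => (z.1, z.2.1 + z.2.2)) (fun z => (z.1, z.1 + z.2))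
      (fun z => (z.1, z.2 - z.1)) (fun _ => rfl) (fun z => by ext <;> simp)]
    rw [show mp (fun z : G × G × G => (z.1, z.2.1 + z.2.2)) (pr p (pr q r)) = pr p (cv q r) from ?_]
    · exact En_pr hp (hq.cv hr)
    · unfold cv
      conv_rhs => rw [← mp_id p]
      rw [← mp_pr]
  have e3 : En (mp (fun z : G × G × G => (z.2.2, z.1 + (z.2.1 + z.2.2))) (pr p (pr q r)))
      = En (cv p q) + En r := by
    rw [En_eq_of hd (Y := fun z : G × G × G => (z.1 + z.2.1, z.2.2)) (fun z => (z.2, z.1 + z.2))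
      (fun z => (z.2 - z.1, z.1)) (fun z => by ext <;> simp [add_assoc])
      (fun z => by ext <;> simp; abel)]
    rw [show mp (fun z : G × G × G => (z.1 + z.2.1, z.2.2)) (pr p (pr q r)) = pr (cv p q) r from ?_]
    · exact En_pr (hp.cv hq) hr
    · rw [mp_of_equiv (Equiv.prodAssoc G G G) (pr (pr p q) r) (pr p (pr q r))
        (fun z => by simp [pr, mul_assoc])]
      unfold cv
      conv_rhs => rw [← mp_id r]
      rw [← mp_pr]
      rfl
  rw [cv_assoc]
  rw [e0, e1, e2, e3] at h
  linarith

/-- quotient drop -/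
theorem drop_cv (f : G →+ G) {p q : G → ℝ} (hp : IsD p) (hq : IsD q) :
    En q - En (mp f q) ≤ En (cv p q) - En (mp f (cv p q)) := by
  have hd := hp.pr hq
  have h := submod hd (fun z : G × G => z.1) (fun z => z.1 + z.2) (fun z => f (z.1 + z.2))
  have e0 : En (mp (fun z : G × G => (z.1, z.1 + z.2, f (z.1 + z.2))) (pr p q)) = En p + En q := by
    rw [En_eq_of hd (Y := fun z => z) (fun z : G × G => (z.1, z.1 + z.2, f (z.1 + z.2)))
      (fun z => (z.1, z.2.1 - z.1)) (fun _ => rfl) (fun z => by ext <;> simp), mp_id, En_pr hp hq]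
  have e1 : mp (fun z : G × G => f (z.1 + z.2)) (pr p q) = mp f (cv p q) := by
    unfold cv; rw [mp_mp]
  have e2 : En (mp (fun z : G × G => (z.1, f (z.1 + z.2))) (pr p q)) = En p + En (mp f q) := by
    rw [En_eq_of hd (Y := fun z : G × G => (z.1, f z.2)) (fun z => (z.1, f z.1 + z.2))
      (fun z => (z.1, z.2 - f z.1)) (fun z => by ext <;> simp) (fun z => by ext <;> simp)]
    rw [show mp (fun z : G × G => (z.1, f z.2)) (pr p q) = pr p (mp f q) from ?_]
    · exact En_pr hp (hq.mp _)
    · conv_rhs => rw [← mp_id p]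
      rw [← mp_pr]
  have e3 : En (mp (fun z : G × G => (z.1 + z.2, f (z.1 + z.2))) (pr p q)) = En (cv p q) :=
    En_eq_of hd (fun z => (z, f z)) (fun z => z.1) (fun _ => rfl) (fun _ => rfl)
  rw [e0, e1, e2, e3] at h
  linarith

/-- doubling mass -/
def sm (p q : G → ℝ) : ℝ := En p + En q - En (cv p q)

theorem sm_comm (p q : G → ℝ) : sm p q = sm q p := by unfold sm; rw [cv_comm]; ring

theorem sm_nonneg {p q : G → ℝ} (hp : IsD p) (hq : IsD q) : 0 ≤ sm p q := by
  unfold sm; linarith [En_cv_le hp hq]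

theorem sm_le_left {p q : G → ℝ} (hp : IsD p) (hq : IsD q) : sm p q ≤ En p := by
  unfold sm; linarith [En_le_cv_right hp hq]

theorem sm_le_right {p q : G → ℝ} (hp : IsD p) (hq : IsD q) : sm p q ≤ En q := by
  unfold sm; linarith [En_le_cv_left hp hq]

theorem sm_drop_left (f : G →+ G) {p q : G → ℝ} (hp : IsD p) (hq : IsD q) :
    sm p q - sm (mp f p) (mp f q) ≤ En p - En (mp f p) := by
  have := drop_cv f hp hq
  rw [mp_cv] at this
  unfold sm
  linarith

theorem sm_drop_right (f : G →+ G) {p q : G → ℝ} (hp : IsD p) (hq : IsD q) :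
    sm p q - sm (mp f p) (mp f q) ≤ En q - En (mp f q) := by
  rw [sm_comm, sm_comm (mp f p)]
  exact sm_drop_left f hq hp

theorem fam_drop (f : G → G) {r : G × β → ℝ} (hr : IsD r) :
    En r - En (mp (fun z : G × β => (f z.1, z.2)) r) ≤
      En (mp Prod.fst r) - En (mp f (mp Prod.fst r)) := by
  have h := submod hr (fun z : G × β => z.1) (fun z => z.2) (fun z => f z.1)
  have e0 : En (mp (fun z : G × β => (z.1, z.2, f z.1)) r) = En r := by
    rw [En_eq_of hr (Y := fun z => z) (fun z : G × β => (z.1, z.2, f z.1)) (fun z => (z.1, z.2.1))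
      (fun _ => rfl) (fun _ => rfl), mp_id]
  have e1 : mp (fun z : G × β => f z.1) r = mp f (mp Prod.fst r) := by rw [mp_mp]
  have e2 : En (mp (fun z : G × β => (z.1, f z.1)) r) = En (mp Prod.fst r) :=
    En_eq_of hr (fun z => (z, f z)) (fun z => z.1) (fun _ => rfl) (fun _ => rfl)
  have e3 : En (mp (fun z : G × β => (z.2, f z.1)) r) = En (mp (fun z : G × β => (f z.1, z.2)) r) :=
    En_eq_of hr (fun z => (z.2, z.1)) (fun z => (z.2, z.1)) (fun _ => rfl) (fun _ => rfl)
  rw [e0, e1, e2, e3] at h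
  linarith

/-- joint family of sums -/
def jn (r₁ : G × β → ℝ) (r₂ : G × γ → ℝ) : G × (β × γ) → ℝ :=
  mp (fun z : (G × β) × (G × γ) => (z.1.1 + z.2.1, (z.1.2, z.2.2))) (pr r₁ r₂)

theorem IsD.jn {r₁ : G × β → ℝ} {r₂ : G × γ → ℝ} (h₁ : IsD r₁) (h₂ : IsD r₂) : IsD (jn r₁ r₂) :=
  (h₁.pr h₂).mp _

theorem wt_jn (r₁ : G × β → ℝ) (r₂ : G × γ → ℝ) : wt (jn r₁ r₂) = pr (wt r₁) (wt r₂) := by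
  unfold wt jn
  rw [mp_mp, ← mp_pr]

theorem fb_jn (r₁ : G × β → ℝ) (r₂ : G × γ → ℝ) (u : β) (w : γ) :
    fb (jn r₁ r₂) (u, w) = cv (fb r₁ u) (fb r₂ w) := by
  classical
  funext a
  unfold fb
  rw [wt_jn]
  unfold jn cv mp pr
  rw [Fintype.sum_prod_type, Fintype.sum_prod_type_right, Finset.sum_eq_single u]
  · rw [Fintype.sum_prod_type, Finset.sum_div]
    refine Finset.sum_congr rfl fun x _ => ?_
    rw [Fintype.sum_prod_type_right, Finset.sum_eq_single w]
    · rw [Finset.sum_div]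
      refine Finset.sum_congr rfl fun y _ => ?_
      by_cases h : x + y = a
      · simp [h, div_mul_div_comm]
      · simp [h]
    · intro b _ hb; simp [hb]
    · simp
  · intro b _ hb; simp [hb]
  · simp

/-- conditional entropy of the sum of two families -/
def fs (r₁ : G × β → ℝ) (r₂ : G × γ → ℝ) : ℝ := En (jn r₁ r₂) - En (wt r₁) - En (wt r₂)

theorem fam_cv {r₁ : G × β → ℝ} {r₂ : G × γ → ℝ} (h₁ : IsD r₁) (h₂ : IsD r₂) :
    ∑ u, wt r₁ u * ∑ w, wt r₂ w * En (cv (fb r₁ u) (fb r₂ w)) = fs r₁ r₂ := by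
  have h := fam_En (h₁.jn h₂)
  rw [wt_jn, En_pr h₁.wt h₂.wt, Fintype.sum_prod_type] at h
  simp_rw [fb_jn] at h
  unfold fs
  rw [sub_sub, ← h]
  refine Finset.sum_congr rfl fun u _ => ?_
  rw [Finset.mul_sum]
  refine Finset.sum_congr rfl fun w _ => ?_
  simp only [pr]; ring

theorem fs_coarse {r₁ : G × β → ℝ} {r₂ : G × γ → ℝ} (h₁ : IsD r₁) (h₂ : IsD r₂)
    (f : β → β') (g : γ → γ') :
    fs r₁ r₂ ≤ fs (mp (fun z : G × β => (z.1, f z.2)) r₁) (mp (fun z : G × γ => (z.1, g z.2)) r₂) := by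
  have h := submod (h₁.jn h₂) (fun z : G × (β × γ) => z.1) (fun z => z.2)
    (fun z => (f z.2.1, g z.2.2))
  have e0 : En (mp (fun z : G × (β × γ) => (z.1, z.2, (f z.2.1, g z.2.2))) (jn r₁ r₂))
      = En (jn r₁ r₂) := by
    rw [En_eq_of (h₁.jn h₂) (Y := fun z => z)
      (fun z : G × (β × γ) => (z.1, z.2, (f z.2.1, g z.2.2))) (fun z => (z.1, z.2.1))
      (fun _ => rfl) (fun _ => rfl), mp_id]
  have e1 : mp (fun z : G × (β × γ) => (f z.2.1, g z.2.2)) (jn r₁ r₂)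
      = pr (mp f (wt r₁)) (mp g (wt r₂)) := by
    rw [← mp_pr, ← wt_jn]; unfold wt; rw [mp_mp]
  have e2 : mp (fun z : G × (β × γ) => (z.1, (f z.2.1, g z.2.2))) (jn r₁ r₂) =
      jn (mp (fun z : G × β => (z.1, f z.2)) r₁) (mp (fun z : G × γ => (z.1, g z.2)) r₂) := by
    unfold jn
    rw [← mp_pr, mp_mp, mp_mp]
  have e3 : En (mp (fun z : G × (β × γ) => (z.2, (f z.2.1, g z.2.2))) (jn r₁ r₂))
      = En (wt r₁) + En (wt r₂) := by
    rw [En_eq_of (h₁.jn h₂) (Y := Prod.snd) (fun z => (z, (f z.1, g z.2))) (fun z => z.1)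
      (fun _ => rfl) (fun _ => rfl)]
    change En (wt (jn r₁ r₂)) = _
    rw [wt_jn, En_pr h₁.wt h₂.wt]
  have e4 : wt (mp (fun z : G × β => (z.1, f z.2)) r₁) = mp f (wt r₁) := by
    unfold wt; rw [mp_mp, mp_mp]
  have e5 : wt (mp (fun z : G × γ => (z.1, g z.2)) r₂) = mp g (wt r₂) := by
    unfold wt; rw [mp_mp, mp_mp]
  rw [e0, e1, e2, e3, En_pr (h₁.wt.mp f) (h₂.wt.mp g)] at h
  unfold fs
  rw [e4, e5]
  linarith

/-- joint law of `(A, A + B)` -/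
def js (a b : G → ℝ) : G × G → ℝ := mp (fun z : G × G => (z.1, z.1 + z.2)) (pr a b)

theorem IsD.js {a b : G → ℝ} (ha : IsD a) (hb : IsD b) : IsD (js a b) := (ha.pr hb).mp _

theorem En_js {a b : G → ℝ} (ha : IsD a) (hb : IsD b) : En (js a b) = En a + En b := by
  unfold js
  rw [En_eq_of (ha.pr hb) (Y := fun z => z) (fun z : G × G => (z.1, z.1 + z.2))
    (fun z => (z.1, z.2 - z.1)) (fun _ => rfl) (fun z => by ext <;> simp), mp_id, En_pr ha hb]

theorem wt_js (a b : G → ℝ) : wt (js a b) = cv a b := by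
  unfold wt js cv; rw [mp_mp]

theorem fst_js {a b : G → ℝ} (hb : IsD b) : mp Prod.fst (js a b) = a := by
  unfold js; rw [mp_mp]; exact mp_fst_pr a b hb

/-- the key family of a quadruple -/
def rR (a₁ a₂ b₁ b₂ : G → ℝ) : G × (G × G) → ℝ := jn (js a₁ a₂) (js b₁ b₂)

theorem rR_eq (a₁ a₂ b₁ b₂ : G → ℝ) : rR a₁ a₂ b₁ b₂ =
    mp (fun z : (G × G) × (G × G) => (z.1.1 + z.2.1, (z.1.1 + z.1.2, z.2.1 + z.2.2)))
      (pr (pr a₁ a₂) (pr b₁ b₂)) := by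
  unfold rR jn js
  rw [← mp_pr, mp_mp]

theorem pr4_swap (a₁ a₂ b₁ b₂ : G → ℝ) (X : (G × G) × (G × G) → β) :
    mp X (pr (pr a₁ a₂) (pr b₁ b₂)) =
      mp (fun z => X ((z.1.1, z.2.1), (z.1.2, z.2.2))) (pr (pr a₁ b₁) (pr a₂ b₂)) :=
  mp_of_equiv (Equiv.prodProdProdComm G G G G) (pr (pr a₁ b₁) (pr a₂ b₂)) (pr (pr a₁ a₂) (pr b₁ b₂))
    (fun z => by
      rcases z with ⟨⟨a, b⟩, ⟨c, d⟩⟩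
      simp only [pr, Equiv.prodProdProdComm_apply, Equiv.prodCongr_apply, Prod.map, Equiv.refl_apply, Equiv.prodComm_apply, Prod.swap]
      ring) X

theorem pr4_flip (a₁ a₂ b₁ b₂ : G → ℝ) (X : (G × G) × (G × G) → β) :
    mp X (pr (pr a₁ a₂) (pr b₁ b₂)) =
      mp (fun z => X (z.1, (z.2.2, z.2.1))) (pr (pr a₁ a₂) (pr b₂ b₁)) :=
  mp_of_equiv ((Equiv.refl (G × G)).prodCongr (Equiv.prodComm G G)) (pr (pr a₁ a₂) (pr b₂ b₁))
    (pr (pr a₁ a₂) (pr b₁ b₂)) (fun z => by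
      rcases z with ⟨⟨a, b⟩, ⟨c, d⟩⟩
      simp only [pr, Equiv.prodProdProdComm_apply, Equiv.prodCongr_apply, Prod.map, Equiv.refl_apply, Equiv.prodComm_apply, Prod.swap]
      ring) X

/-- entropy of the triple of pairwise sums -/
def JJ (a₁ a₂ b₁ b₂ : G → ℝ) : ℝ := En (rR a₁ a₂ b₁ b₂)

variable {a₁ a₂ b₁ b₂ : G → ℝ} (h₁ : IsD a₁) (h₂ : IsD a₂) (h₃ : IsD b₁) (h₄ : IsD b₂)

theorem IsD.rR {a₁ a₂ b₁ b₂ : G → ℝ} (h₁ : IsD a₁) (h₂ : IsD a₂) (h₃ : IsD b₁) (h₄ : IsD b₂) :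
    IsD (rR a₁ a₂ b₁ b₂) := (h₁.js h₂).jn (h₃.js h₄)

theorem wt_rR (a₁ a₂ b₁ b₂ : G → ℝ) : wt (rR a₁ a₂ b₁ b₂) = pr (cv a₁ a₂) (cv b₁ b₂) := by
  unfold rR; rw [wt_jn, wt_js, wt_js]

theorem fst_rR {a₁ a₂ b₁ b₂ : G → ℝ} (h₁ : IsD a₁) (h₂ : IsD a₂) (h₃ : IsD b₁) (h₄ : IsD b₂) :
    mp Prod.fst (rR a₁ a₂ b₁ b₂) = cv a₁ b₁ := by
  rw [rR_eq, mp_mp]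
  unfold cv
  have e := mp_mp (fun z : (G × G) × (G × G) => (z.1.1, z.2.1)) (fun y : G × G => y.1 + y.2)
    (pr (pr a₁ a₂) (pr b₁ b₂))
  refine e.symm.trans ?_
  rw [mp_pr Prod.fst Prod.fst, mp_fst_pr _ _ h₂, mp_fst_pr _ _ h₄]

theorem mp_pr4_sums (a₁ a₂ b₁ b₂ : G → ℝ) :
    mp (fun z : (G × G) × (G × G) => (z.1.1 + z.1.2, z.2.1 + z.2.2)) (pr (pr a₁ a₂) (pr b₁ b₂))
      = pr (cv a₁ a₂) (cv b₁ b₂) := by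
  unfold cv; rw [← mp_pr]

theorem mp_pr4_sums' (a₁ a₂ b₁ b₂ : G → ℝ) :
    mp (fun z : (G × G) × (G × G) => (z.1.1 + z.2.1, z.1.2 + z.2.2)) (pr (pr a₁ a₂) (pr b₁ b₂))
      = pr (cv a₁ b₁) (cv a₂ b₂) := by
  rw [pr4_swap]; exact mp_pr4_sums _ _ _ _

theorem fs_js {a₁ a₂ b₁ b₂ : G → ℝ} : fs (js a₁ a₂) (js b₁ b₂) =
    JJ a₁ a₂ b₁ b₂ - En (cv a₁ a₂) - En (cv b₁ b₂) := by
  unfold fs JJ rR; rw [wt_js, wt_js]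

/-- law of `(U, S)` -/
theorem rR_US (a₁ a₂ b₁ b₂ : G → ℝ) :
    mp (fun z : G × (G × G) => (z.1, z.2.1 + z.2.2)) (rR a₁ a₂ b₁ b₂)
      = js (cv a₁ b₁) (cv a₂ b₂) := by
  unfold js
  rw [← mp_pr4_sums', mp_mp, rR_eq, mp_mp]
  congr 1
  funext z
  simp; abel

theorem Q1 {a₁ a₂ b₁ b₂ : G → ℝ} (h₁ : IsD a₁) (h₂ : IsD a₂) (h₃ : IsD b₁) (h₄ : IsD b₂) :
    JJ a₁ a₂ b₁ b₂ + En (cv (cv a₁ b₁) (cv a₂ b₂)) ≤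
    En (cv a₁ b₁) + En (cv a₂ b₂) + En (cv a₁ a₂) + En (cv b₁ b₂) := by
  have hd := h₁.rR h₂ h₃ h₄
  have h := submod hd (fun z : G × (G × G) => z.1) (fun z => z.2) (fun z => z.2.1 + z.2.2)
  have e0 : En (mp (fun z : G × (G × G) => (z.1, z.2, z.2.1 + z.2.2)) (rR a₁ a₂ b₁ b₂))
      = JJ a₁ a₂ b₁ b₂ := by
    rw [En_eq_of hd (Y := fun z => z) (fun z : G × (G × G) => (z.1, z.2, z.2.1 + z.2.2))
      (fun z => (z.1, z.2.1)) (fun _ => rfl) (fun _ => rfl), mp_id]; rfl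
  have e1 : mp (fun z : G × (G × G) => z.2.1 + z.2.2) (rR a₁ a₂ b₁ b₂)
      = cv (cv a₁ b₁) (cv a₂ b₂) := by
    have := wt_js (cv a₁ b₁) (cv a₂ b₂)
    rw [← rR_US] at this
    unfold wt at this
    rw [mp_mp] at this
    exact this
  have e3 : En (mp (fun z : G × (G × G) => (z.2, z.2.1 + z.2.2)) (rR a₁ a₂ b₁ b₂))
      = En (cv a₁ a₂) + En (cv b₁ b₂) := by
    rw [En_eq_of hd (Y := Prod.snd) (fun z : G × G => (z, z.1 + z.2)) (fun z => z.1)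
      (fun _ => rfl) (fun _ => rfl)]
    change En (wt _) = _
    rw [wt_rR, En_pr (h₁.cv h₂) (h₃.cv h₄)]
  rw [e0, e1, rR_US, e3, En_js (h₁.cv h₃) (h₂.cv h₄)] at h
  linarith

end grp

section char2
variable {G : Type*} [AddCommGroup G] [Module (ZMod 2) G] [Fintype G]
variable {β γ : Type*} [Fintype β] [Fintype γ]

theorem add_self2 (x : G) : x + x = 0 := by
  have : (2 : ZMod 2) • x = 0 := by
    rw [show (2 : ZMod 2) = 0 from rfl, zero_smul]
  rwa [two_smul] at this

theorem add_cancel2 (x y : G) : x + (x + y) = y := by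
  rw [← add_assoc, add_self2, zero_add]

theorem two_smul2 (x : G) : (2 : ℤ) • x = 0 := by
  rw [two_smul, add_self2]

theorem sub_eq_add2 (x y : G) : x - y = x + y := by
  rw [sub_eq_iff_eq_add, add_assoc, add_self2, add_zero]

theorem Q2 {a₁ a₂ b₁ b₂ : G → ℝ} (h₁ : IsD a₁) (h₂ : IsD a₂) (h₃ : IsD b₁) (h₄ : IsD b₂) :
    JJ a₁ a₂ b₁ b₂ = JJ a₁ b₁ b₂ a₂ := by
  unfold JJ
  rw [rR_eq, rR_eq, pr4_swap a₁ a₂ b₁ b₂, pr4_flip a₁ b₁ b₂ a₂]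
  refine En_eq_of ((h₁.pr h₃).pr (h₂.pr h₄)) (fun z => (z.2.1, (z.1 + z.2.2, z.1 + z.2.1)))
    (fun z => (z.1 + z.2.2, (z.1, z.1 + z.2.1 + z.2.2))) (fun z => ?_) (fun z => ?_)
  all_goals
    rcases z with ⟨⟨a, b⟩, ⟨c, d⟩⟩
    simp only [Prod.mk.injEq]
    refine ⟨?_, ?_, ?_⟩ <;> try trivial
  all_goals
    rw [← sub_eq_zero]
    simp only [sub_eq_add2]
    abel_nf
    try simp only [two_smul2, add_zero, zero_add]

end char2
end PF

namespace PF

set_option linter.unusedSectionVars false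
set_option linter.unusedVariables false
set_option linter.unusedSimpArgs false

section diag
variable {G : Type*} [AddCommGroup G] [Module (ZMod 2) G] [Fintype G]
variable {β γ : Type*} [Fintype β] [Fintype γ]

def dg (r : G × β → ℝ) : G × β → ℝ := mp (fun z : G × G × β => (z.1 + z.2.1, z.2.2)) (cpl r)

theorem wt_dg {r : G × β → ℝ} (hr : IsD r) : wt (dg r) = wt r := by
  unfold dg wt
  rw [mp_mp]
  conv_rhs => rw [← cpl_snd hr]
  rw [mp_mp]

theorem fb_dg {r : G × β → ℝ} (hr : IsD r) (w : β) : fb (dg r) w = cv (fb r w) (fb r w) := by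
  classical
  funext a
  unfold fb
  rw [wt_dg hr]
  unfold dg cv mp pr cpl
  simp only [Fintype.sum_prod_type]
  rw [Finset.sum_div]
  refine Finset.sum_congr rfl fun x _ => ?_
  rw [Finset.sum_div]
  refine Finset.sum_congr rfl fun y _ => ?_
  rw [Finset.sum_eq_single w]
  · by_cases h : x + y = a
    · simp [h, div_mul_div_comm, div_div]
    · simp [h]
  · intro b _ hb; simp [hb]
  · simp

theorem diag_eq {r : G × β → ℝ} (hr : IsD r) :
    ∑ z, wt r z * En (cv (fb r z) (fb r z)) = En (dg r) - En (wt r) := by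
  have h := fam_En (r := dg r) (hr.cpl.mp _)
  rw [wt_dg hr] at h
  rw [← h]
  simp_rw [fb_dg hr]

theorem rR_US' (a₁ a₂ b₁ b₂ : G → ℝ) :
    mp (fun z : G × (G × G) => (z.1 + z.2.2, z.2.1 + z.2.2)) (rR a₁ a₂ b₁ b₂)
      = js (cv a₁ b₂) (cv a₂ b₁) := by
  rw [← rR_US, rR_eq, rR_eq, mp_mp, mp_mp, pr4_flip]
  congr 1
  funext z
  rcases z with ⟨⟨a, b⟩, ⟨c, d⟩⟩
  simp only [Prod.mk.injEq]
  constructor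
  · rw [add_assoc]; congr 1; rw [add_cancel2]
  · abel

theorem diag_le {p q : G → ℝ} (hp : IsD p) (hq : IsD q) :
    ∑ z, wt (rR p p q q) z * En (cv (fb (rR p p q q) z) (fb (rR p p q q) z)) ≤
      8 * En (cv p q) - 3 * En (cv (cv p q) (cv p q)) - 2 * JJ p p q q
        + En (cv p p) + En (cv q q) := by
  have hr := hp.rR hp hq hq
  have hc := hr.cpl
  have hT := hp.cv hq
  rw [diag_eq hr]
  set r := rR p p q q with hrd
  set c := cpl r with hcd
  have z1 : En (wt r) = En (cv p p) + En (cv q q) := by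
    rw [hrd, wt_rR, En_pr (hp.cv hp) (hq.cv hq)]
  have hJ : En r = JJ p p q q := rfl
  have s1 := submod hc (fun z : G × G × (G × G) => z.1) (fun z => z.1 + z.2.2.2)
    (fun z => (z.1 + z.2.1 + z.2.2.2, z.2.2.1 + z.2.2.2))
  have e1 : En (mp (fun z : G × G × (G × G) => (z.1, z.1 + z.2.2.2,
      (z.1 + z.2.1 + z.2.2.2, z.2.2.1 + z.2.2.2))) c) = En c := by
    rw [En_eq_of hc (Y := fun z => z) (fun z : G × G × (G × G) => (z.1, z.1 + z.2.2.2,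
      (z.1 + z.2.1 + z.2.2.2, z.2.2.1 + z.2.2.2)))
      (fun z => (z.1, z.2.2.1 - z.2.1, (z.2.2.2 - (z.2.1 - z.1), z.2.1 - z.1)))
      (fun _ => rfl) ?_, mp_id]
    intro z
    ext <;> simp <;> abel
  have e2 : En (mp (fun z : G × G × (G × G) => (z.1,
      (z.1 + z.2.1 + z.2.2.2, z.2.2.1 + z.2.2.2))) c) = 
      En (mp (fun z : G × G × (G × G) => (z.1,
      z.2.1 + z.2.2.2, z.2.2.1 + z.2.2.2)) c) :=
    En_eq_of hc (fun z => (z.1, (z.1 + z.2.1, z.2.2))) (fun z => (z.1, (z.2.1 - z.1, z.2.2)))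
      (fun z => by ext <;> simp [add_assoc]) (fun z => by ext <;> simp [add_assoc])
  have e3 : En (mp (fun z : G × G × (G × G) => (z.1 + z.2.2.2,
      (z.1 + z.2.1 + z.2.2.2, z.2.2.1 + z.2.2.2))) c) = 
      En (mp (fun z : G × G × (G × G) => (z.1 + z.2.2.2,
      z.2.1, z.2.2.1 + z.2.2.2)) c) :=
    En_eq_of hc (fun z => (z.1, (z.1 + z.2.1, z.2.2))) (fun z => (z.1, (z.2.1 - z.1, z.2.2)))
      (fun z => by ext <;> simp; abel) (fun z => by ext <;> simp)
  have s2 := submod hc (fun z : G × G × (G × G) => z.1) (fun z => z.2.1 + z.2.2.2)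
    (fun z => z.2.2.1 + z.2.2.2)
  have s3 := submod hc (fun z : G × G × (G × G) => z.1 + z.2.2.2) (fun z => z.2.1)
    (fun z => z.2.2.1 + z.2.2.2)
  have f1 : mp (fun z : G × G × (G × G) => (z.1, z.2.2.1 + z.2.2.2)) c = js (cv p q) (cv p q) := by
    rw [← rR_US, ← hrd, ← cpl_fst hr, mp_mp]
  have f2 : mp (fun z : G × G × (G × G) => (z.1 + z.2.2.2, z.2.2.1 + z.2.2.2)) c
      = js (cv p q) (cv p q) := by
    rw [← rR_US', ← hrd, ← cpl_fst hr, mp_mp]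
  have f3 : mp (fun z : G × G × (G × G) => (z.2.1, z.2.2.1 + z.2.2.2)) c
      = js (cv p q) (cv p q) := by
    rw [← rR_US, ← hrd, ← cpl_snd hr, mp_mp]
  have f4 : mp (fun z : G × G × (G × G) => (z.2.1 + z.2.2.2, z.2.2.1 + z.2.2.2)) c
      = js (cv p q) (cv p q) := by
    rw [← rR_US', ← hrd, ← cpl_snd hr, mp_mp]
  have f5 : mp (fun z : G × G × (G × G) => z.2.2.1 + z.2.2.2) c = cv (cv p q) (cv p q) := by
    rw [← wt_js, ← f1]; unfold wt; rw [mp_mp]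
  have s4 := submod hc (fun z : G × G × (G × G) => z.1 + z.2.1 + z.2.2.2) (fun z => z.2.2)
    (fun z => z.2.2.1 + z.2.2.2)
  have e4 : En (mp (fun z : G × G × (G × G) => (z.1 + z.2.1 + z.2.2.2, z.2.2, z.2.2.1 + z.2.2.2)) c)
      = En (dg r) :=
    En_eq_of hc (fun z : G × (G × G) => (z.1 + z.2.2, z.2, z.2.1 + z.2.2))
      (fun z => (z.1 - z.2.1.2, z.2.1)) (fun _ => rfl) (fun z => by ext <;> simp)
  have e5 : En (mp (fun z : G × G × (G × G) => (z.2.2, z.2.2.1 + z.2.2.2)) c) = En (wt r) := by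
    rw [En_eq_of hc (Y := fun z => z.2.2) (fun z : (G × G) => (z, z.1 + z.2))
      (fun z => z.1) (fun _ => rfl) (fun z => rfl)]
    rw [← cpl_snd hr]; unfold wt; rw [mp_mp]
  have e6 := En_cpl hr
  rw [e1, e2, e3] at s1
  rw [f1, f4, f5, En_js hT hT] at s2
  rw [f2, f3, f5, En_js hT hT] at s3
  rw [e4, e5, f5] at s4
  rw [← hcd] at e6
  rw [hJ] at e6
  linarith

theorem cv4 (p q : G → ℝ) : cv (cv p p) (cv q q) = cv (cv p q) (cv p q) := by
  rw [cv_assoc, ← cv_assoc p q q, cv_comm (cv p q) q, ← cv_assoc, ]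

end diag
end PF

namespace PF

set_option linter.unusedSectionVars false
set_option linter.unusedVariables false
set_option linter.unusedSimpArgs false

/-- the vector space -/
abbrev GG (n : ℕ) : Type := Fin n → ZMod 2

/-- endomorphisms -/
abbrev LL (n : ℕ) : Type := GG n →ₗ[ZMod 2] GG n

/-- log-size of the kernel -/
def ks {n : ℕ} (f : LL n) : ℝ := (Module.finrank (ZMod 2) (LinearMap.ker f) : ℝ) * Real.log 2

variable {n : ℕ}

theorem ks_nonneg (f : LL n) : 0 ≤ ks f :=
  mul_nonneg (Nat.cast_nonneg _) (Real.log_nonneg (by norm_num))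

theorem ks_id : ks (LinearMap.id : LL n) = 0 := by
  unfold ks
  rw [LinearMap.ker_id]; simp

theorem ks_comp (g f : LL n) : ks (g ∘ₗ f) ≤ ks f + ks g := by
  have h : Module.finrank (ZMod 2) (LinearMap.ker (g ∘ₗ f)) ≤
      Module.finrank (ZMod 2) (LinearMap.ker f) + Module.finrank (ZMod 2) (LinearMap.ker g) := by
    set f' := f.domRestrict (LinearMap.ker (g ∘ₗ f)) with hf'
    have h1 := LinearMap.finrank_range_add_finrank_ker f'
    have h2 : Module.finrank (ZMod 2) (LinearMap.range f') ≤
        Module.finrank (ZMod 2) (LinearMap.ker g) := by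
      apply Submodule.finrank_mono
      rintro _ ⟨x, rfl⟩
      exact x.2
    have h3 : Module.finrank (ZMod 2) (LinearMap.ker f') ≤
        Module.finrank (ZMod 2) (LinearMap.ker f) := by
      have : ∀ x : LinearMap.ker f', ((x : LinearMap.ker (g ∘ₗ f)) : GG n) ∈ LinearMap.ker f := by
        intro x
        exact x.2
      let i : LinearMap.ker f' →ₗ[ZMod 2] LinearMap.ker f :=
        LinearMap.codRestrict _ ((LinearMap.ker (g ∘ₗ f)).subtype ∘ₗ (LinearMap.ker f').subtype) this
      apply LinearMap.finrank_le_finrank_of_injective (f := i)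
      intro x y hxy
      apply Subtype.ext
      apply Subtype.ext
      exact congrArg (fun t : LinearMap.ker f => (t : GG n)) hxy
    omega
  unfold ks
  rw [← add_mul]
  apply mul_le_mul_of_nonneg_right _ (Real.log_nonneg (by norm_num))
  exact_mod_cast h

theorem mp_comp (g f : LL n) (p : GG n → ℝ) : mp (g ∘ₗ f) p = mp g (mp f p) := by
  rw [mp_mp]; rfl

theorem mp_idL (p : GG n → ℝ) : mp (LinearMap.id : LL n) p = p := mp_id p

theorem mp_cvL (f : LL n) (p q : GG n → ℝ) : mp f (cv p q) = cv (mp f p) (mp f q) :=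
  mp_cv f.toAddMonoidHom p q

theorem dropL {p q : GG n → ℝ} (f : LL n) (hp : IsD p) (hq : IsD q) :
    sm p q - sm (mp f p) (mp f q) ≤ En p - En (mp f p) := sm_drop_left f.toAddMonoidHom hp hq

theorem dropR {p q : GG n → ℝ} (f : LL n) (hp : IsD p) (hq : IsD q) :
    sm p q - sm (mp f p) (mp f q) ≤ En q - En (mp f q) := sm_drop_right f.toAddMonoidHom hp hq

/-- Statement A -/
def StatA (η L c : ℝ) : Prop :=
  ∀ (n : ℕ) (p q : GG n → ℝ), IsD p → IsD q → η * (En p + En q) ≤ sm p q →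
    ∃ f : LL n, ks f ≤ L * (En p + En q) ∧
      En (mp f p) + En (mp f q) ≤ (1 - c) * (En p + En q)

/-- Statement A with existential constants -/
def PA (η : ℝ) : Prop := ∃ L c : ℝ, 0 ≤ L ∧ 0 < c ∧ c < 1 ∧ StatA η L c

theorem PA.mono {η η' : ℝ} (h : η ≤ η') (hA : PA η) : PA η' := by
  obtain ⟨L, c, hL, hc, hc1, hA⟩ := hA
  refine ⟨L, c, hL, hc, hc1, fun n p q hp hq hs => hA n p q hp hq (le_trans ?_ hs)⟩
  exact mul_le_mul_of_nonneg_right h (add_nonneg (En_nonneg hp) (En_nonneg hq))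

theorem L1 {ρ : ℝ} (hA : PA ρ) (hρ : 0 ≤ ρ) {ε : ℝ} (hε : 0 < ε) :
    ∃ L' : ℝ, 0 ≤ L' ∧ ∀ (n : ℕ) (p q : GG n → ℝ) (K : ℝ), IsD p → IsD q → En p + En q ≤ K →
      ρ * (En p + En q) + 2 * ε * K ≤ sm p q →
      ∃ f : LL n, ks f ≤ L' * K ∧ ε * K ≤ En p - En (mp f p) := by
  obtain ⟨L, c, hL, hc, hc1, hA⟩ := hA
  obtain ⟨N, hN⟩ := exists_pow_lt_of_lt_one hε (show 1 - c < 1 by linarith)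
  refine ⟨N * L, by positivity, fun n p q K hp hq hK hs => ?_⟩
  have hEp := En_nonneg hp
  have hEq := En_nonneg hq
  have hK0 : 0 ≤ K := by linarith
  have key : ∀ j : ℕ, ∃ f : LL n, ks f ≤ j * L * K ∧ (ε * K ≤ En p - En (mp f p) ∨
      En (mp f p) + En (mp f q) ≤ (1 - c) ^ j * K) := by
    intro j
    induction j with
    | zero => exact ⟨LinearMap.id, by rw [ks_id]; simp, Or.inr (by rw [mp_idL, mp_idL]; simpa using hK)⟩
    | succ j ih =>
      obtain ⟨f, hf, h⟩ := ih
      have hLK : 0 ≤ L * K := by positivity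
      by_cases h1 : ε * K ≤ En p - En (mp f p)
      · exact ⟨f, by push_cast; nlinarith, Or.inl h1⟩
      have h2 := h.resolve_left h1
      push Not at h1
      have hd := dropL f hp hq
      have i1 := En_mp_le hp f
      have i2 := En_mp_le hq f
      obtain ⟨g, hg, hg2⟩ := hA n (mp f p) (mp f q) (hp.mp _) (hq.mp _) (by nlinarith)
      refine ⟨g ∘ₗ f, ?_, Or.inr ?_⟩
      · have := ks_comp g f
        have : L * (En (mp f p) + En (mp f q)) ≤ L * K :=
          mul_le_mul_of_nonneg_left (by linarith) hL
        push_cast; linarith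
      · rw [mp_comp, mp_comp, pow_succ]
        have : (1 - c) * (En (mp f p) + En (mp f q)) ≤ (1 - c) * ((1 - c) ^ j * K) :=
          mul_le_mul_of_nonneg_left h2 (by linarith)
        linarith
  obtain ⟨f, hf, h⟩ := key N
  refine ⟨f, hf, ?_⟩
  rcases h with h | h
  · exact h
  · have hd := dropL f hp hq
    have h1 := sm_le_left (hp.mp f) (hq.mp f)
    have h2 := En_nonneg (hq.mp f)
    have h3 : (1 - c) ^ N * K ≤ ε * K := mul_le_mul_of_nonneg_right hN.le hK0
    have : 0 ≤ ρ * (En p + En q) := by positivity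
    linarith

/-- conditional entropy of a family -/
def hh {α β : Type*} [Fintype α] [Fintype β] (r : α × β → ℝ) : ℝ := En r - En (wt r)

theorem avg_hh {α β : Type*} [Fintype α] [Fintype β] {r : α × β → ℝ} (hr : IsD r) :
    ∑ w, wt r w * En (fb r w) = hh r := fam_En hr

theorem hh_le {α β : Type*} [Fintype α] [Fintype β] {r : α × β → ℝ} (hr : IsD r) :
    hh r ≤ En (mp Prod.fst r) := by
  have h := subadd hr (fun z : α × β => z.1) (fun z => z.2)
  have e : mp (fun z : α × β => (z.1, z.2)) r = r := mp_id r
  rw [e] at h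
  unfold hh wt
  have e1 : mp (fun z : α × β => z.1) r = mp Prod.fst r := rfl
  have e2 : mp (fun z : α × β => z.2) r = mp Prod.snd r := rfl
  rw [e1, e2] at h
  linarith

/-- weighted-average monotonicity -/
theorem avg_le {α : Type*} [Fintype α] {w f g : α → ℝ} (hw : IsD w)
    (h : ∀ a, 0 < w a → f a ≤ g a) : ∑ a, w a * f a ≤ ∑ a, w a * g a := by
  refine Finset.sum_le_sum fun a _ => ?_
  rcases (hw.1 a).eq_or_lt with h0 | h0
  · rw [← h0]; simp
  · exact mul_le_mul_of_nonneg_left (h a h0) h0.le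

theorem avg_const {α : Type*} [Fintype α] {w : α → ℝ} (hw : IsD w) (c : ℝ) :
    ∑ a, w a * c = c := by
  rw [← Finset.sum_mul, hw.2, one_mul]

/-- family map -/
def fmap {n : ℕ} {β : Type*} [Fintype β] (f : LL n) (r : GG n × β → ℝ) : GG n × β → ℝ :=
  mp (fun z : GG n × β => (f z.1, z.2)) r

section fam
variable {β γ : Type*} [Fintype β] [Fintype γ]

theorem IsD.fmap {r : GG n × β → ℝ} (hr : IsD r) (f : LL n) : IsD (fmap f r) := hr.mp _

theorem wt_fmap (f : LL n) (r : GG n × β → ℝ) : wt (fmap f r) = wt r := wt_map _ _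

theorem fb_fmap (f : LL n) (r : GG n × β → ℝ) (w : β) : fb (fmap f r) w = mp f (fb r w) :=
  fb_map _ _ _

theorem fst_fmap (f : LL n) (r : GG n × β → ℝ) : mp Prod.fst (fmap f r) = mp f (mp Prod.fst r) := by
  unfold fmap; rw [mp_mp, mp_mp]

theorem hh_drop (f : LL n) {r : GG n × β → ℝ} (hr : IsD r) :
    hh r - hh (fmap f r) ≤ En (mp Prod.fst r) - En (mp f (mp Prod.fst r)) := by
  have := fam_drop (f : GG n → GG n) hr
  unfold hh
  rw [wt_fmap]
  unfold fmap
  linarith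

theorem avg_sm_drop (f : LL n) {p : GG n → ℝ} (hp : IsD p) {r : GG n × β → ℝ} (hr : IsD r) :
    ∑ w, wt r w * sm p (fb r w) - ∑ w, wt r w * sm (mp f p) (mp f (fb r w)) ≤
      En (mp Prod.fst r) - En (mp f (mp Prod.fst r)) := by
  have h1 : ∑ w, wt r w * (sm p (fb r w) - sm (mp f p) (mp f (fb r w))) ≤
      ∑ w, wt r w * (En (fb r w) - En (mp f (fb r w))) :=
    avg_le hr.wt fun w hw => dropR f hp (hr.fb hw)
  simp only [mul_sub, Finset.sum_sub_distrib] at h1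
  have h2 := avg_hh (hr.fmap f)
  simp_rw [wt_fmap, fb_fmap] at h2
  rw [h2, avg_hh hr] at h1
  linarith [hh_drop f hr]

theorem L3 {ρ : ℝ} (hA : PA ρ) (hρ : 0 < ρ) {ε : ℝ} (hε : 0 < ε) {C : ℝ} (hC : 0 < C) :
    ∃ L' : ℝ, 0 ≤ L' ∧ ∀ (n : ℕ) (β : Type) [Fintype β] (p : GG n → ℝ) (r : GG n × β → ℝ) (K : ℝ),
      IsD p → IsD r → 0 ≤ K → En (mp Prod.fst r) ≤ C * K →
      ρ * (En p + hh r) + ε * K ≤ ∑ w, wt r w * sm p (fb r w) →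
      ∃ f : LL n, ks f ≤ L' * K ∧
        ε / 2 * K ≤ En (mp Prod.fst r) - En (mp f (mp Prod.fst r)) := by
  set B := C / ρ + C / ρ ^ 2 with hB
  have hB0 : 0 < B := by positivity
  obtain ⟨L, hL, h1⟩ := L1 hA hρ.le (ε := ε / (4 * B)) (by positivity)
  obtain ⟨N, hN⟩ := exists_nat_gt (C / ρ / (ε / 4))
  refine ⟨N * L * B, by positivity, fun n β _ p r K hp hr hK hC' hs => ?_⟩
  rcases hK.eq_or_lt with hK0 | hKpos
  · refine ⟨LinearMap.id, by rw [ks_id, ← hK0]; simp, ?_⟩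
    rw [← hK0, mp_idL]; simp
  by_contra hcon
  push Not at hcon
  have hEp := En_nonneg hp
  have hhr : 0 ≤ hh r := by
    rw [← avg_hh hr]
    refine Finset.sum_nonneg fun w _ => ?_
    rcases (hr.wt.1 w).eq_or_lt with h0 | h0
    · rw [← h0]; simp
    · exact mul_nonneg h0.le (En_nonneg (hr.fb h0))
  have hEpb : En p ≤ C / ρ * K := by
    have : ∑ w, wt r w * sm p (fb r w) ≤ ∑ w, wt r w * En (fb r w) :=
      avg_le hr.wt fun w hw => sm_le_right hp (hr.fb hw)
    rw [avg_hh hr] at this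
    have h3 := hh_le hr
    have h4 : 0 ≤ ρ * hh r := by positivity
    have h5 : 0 ≤ ε * K := by positivity
    have : ρ * En p ≤ C * K := by linarith
    rw [div_mul_eq_mul_div, le_div_iff₀ hρ]
    linarith
  have key : ∀ j : ℕ, j ≤ N → ∃ f : LL n, ks f ≤ j * L * B * K ∧
      En (mp f p) ≤ En p - j * (ε / 4 * K) := by
    intro j
    induction j with
    | zero => intro _; exact ⟨LinearMap.id, by rw [ks_id]; simp, by rw [mp_idL]; simp⟩
    | succ j ih =>
      intro hj
      obtain ⟨f, hf, hf2⟩ := ih (by omega)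
      have hj' : (j : ℝ) ≤ N := by exact_mod_cast (by omega : j ≤ N)
      have hcap := hcon f (hf.trans (by
        have : 0 ≤ L * B * K := by positivity
        nlinarith))
      have a1 := avg_sm_drop f hp hr
      have a2 := hh_drop f hr
      have a3 := En_mp_le hp f
      have avg : ε / 2 * K ≤ ∑ w, wt r w *
          (sm (mp f p) (mp f (fb r w)) - ρ * (En (mp f p) + En (mp f (fb r w)))) := by
        have h2 := avg_hh (hr.fmap f)
        simp_rw [wt_fmap, fb_fmap] at h2
        have e : ∑ w, wt r w *
          (sm (mp f p) (mp f (fb r w)) - ρ * (En (mp f p) + En (mp f (fb r w)))) =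
          ∑ w, wt r w * sm (mp f p) (mp f (fb r w)) - ρ * (En (mp f p) + hh (fmap f r)) := by
          rw [← h2, mul_add, Finset.mul_sum]
          simp only [mul_sub, Finset.sum_sub_distrib, mul_add, Finset.sum_add_distrib]
          rw [avg_const hr.wt]
          congr 2
          exact Finset.sum_congr rfl fun w _ => by ring
        rw [e]
        have h3 : hh (fmap f r) ≤ hh r := by
          have := En_mp_le hr (fun z : GG n × β => (f z.1, z.2))
          unfold hh; rw [wt_fmap]; unfold fmap; linarith
        have h4 : ρ * (En (mp f p) + hh (fmap f r)) ≤ ρ * (En p + hh r) :=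
          mul_le_mul_of_nonneg_left (by linarith) hρ.le
        linarith
      obtain ⟨w, hw, hsw⟩ := exists_of_avg hr.wt avg
      have hfw := hr.fb hw
      have b1 := sm_le_left (hp.mp f) (hfw.mp f)
      have b2 := En_nonneg (hp.mp f)
      have b3 := En_nonneg (hfw.mp f)
      have b4 : 0 ≤ ε / 2 * K := by positivity
      have b5 : ρ * En (mp f (fb r w)) ≤ C / ρ * K := by nlinarith
      have b6 : En (mp f (fb r w)) ≤ C / ρ ^ 2 * K := by
        have : En (mp f (fb r w)) ≤ C / ρ * K / ρ := by
          rw [le_div_iff₀ hρ]; linarith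
        refine this.trans (le_of_eq ?_)
        field_simp
      have b7 : En (mp f p) + En (mp f (fb r w)) ≤ B * K := by
        rw [hB, add_mul]; linarith
      obtain ⟨g, hg1, hg2⟩ := h1 n (mp f p) (mp f (fb r w)) (B * K) (hp.mp _) (hfw.mp _) b7 (by
        have : 2 * (ε / (4 * B)) * (B * K) = ε / 2 * K := by field_simp; ring
        rw [this]; linarith)
      refine ⟨g ∘ₗ f, ?_, ?_⟩
      · have := ks_comp g f
        push_cast; nlinarith
      · rw [mp_comp]
        have : (ε / (4 * B)) * (B * K) = ε / 4 * K := by field_simp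
        rw [this] at hg2
        push_cast; linarith
  obtain ⟨f, hf, hf2⟩ := key N le_rfl
  have b2 := En_nonneg (hp.mp f)
  rw [div_lt_iff₀ (by positivity)] at hN
  have : C / ρ * K < N * (ε / 4) * K := mul_lt_mul_of_pos_right hN hKpos
  linarith

theorem L3two {ρ : ℝ} (hA : PA ρ) (hρ : 0 < ρ) {ε : ℝ} (hε : 0 < ε) {C : ℝ} (hC : 0 < C) :
    ∃ L' : ℝ, 0 ≤ L' ∧ ∀ (n : ℕ) (β γ : Type) [Fintype β] [Fintype γ] (r₁ : GG n × β → ℝ)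
      (r₂ : GG n × γ → ℝ) (K : ℝ),
      IsD r₁ → IsD r₂ → 0 ≤ K → En (mp Prod.fst r₂) ≤ C * K →
      ρ * (hh r₁ + hh r₂) + ε * K ≤ hh r₁ + hh r₂ - fs r₁ r₂ →
      ∃ f : LL n, ks f ≤ L' * K ∧
        ε / 2 * K ≤ En (mp Prod.fst r₂) - En (mp f (mp Prod.fst r₂)) := by
  obtain ⟨L, hL, h⟩ := L3 hA hρ hε hC
  refine ⟨L, hL, fun n β γ _ _ r₁ r₂ K h₁ h₂ hK hC' hs => ?_⟩
  have avg : ε * K ≤ ∑ u, wt r₁ u *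
      (∑ w, wt r₂ w * sm (fb r₁ u) (fb r₂ w) - ρ * (En (fb r₁ u) + hh r₂)) := by
    have e1 : ∀ u, ∑ w, wt r₂ w * sm (fb r₁ u) (fb r₂ w) =
        En (fb r₁ u) + hh r₂ - ∑ w, wt r₂ w * En (cv (fb r₁ u) (fb r₂ w)) := by
      intro u
      unfold sm
      simp only [mul_sub, Finset.sum_sub_distrib, mul_add, Finset.sum_add_distrib]
      rw [avg_const h₂.wt, avg_hh h₂]
    have e2 : ∑ u, wt r₁ u *
      (∑ w, wt r₂ w * sm (fb r₁ u) (fb r₂ w) - ρ * (En (fb r₁ u) + hh r₂))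
      = hh r₁ + hh r₂ - fs r₁ r₂ - ρ * (hh r₁ + hh r₂) := by
      simp_rw [e1]
      rw [← fam_cv h₁ h₂, ← avg_hh h₁]
      simp only [mul_sub, Finset.sum_sub_distrib, mul_add, Finset.sum_add_distrib, Finset.mul_sum]
      rw [avg_const h₁.wt, avg_const h₁.wt]
      have : ∑ u, wt r₁ u * (ρ * En (fb r₁ u)) = ∑ u, ρ * (wt r₁ u * En (fb r₁ u)) :=
        Finset.sum_congr rfl fun w _ => by ring
      rw [this]
    rw [e2]; linarith
  obtain ⟨u, hu, hsu⟩ := exists_of_avg h₁.wt avg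
  exact h n γ (fb r₁ u) r₂ K (h₁.fb hu) h₂ hK hC' (by linarith)

end fam
end PF

namespace PF

set_option linter.unusedSectionVars false
set_option linter.unusedVariables false
set_option linter.unusedSimpArgs false

theorem hh_nonneg {α β : Type*} [Fintype α] [Fintype β] {r : α × β → ℝ} (hr : IsD r) : 0 ≤ hh r := by
  rw [← avg_hh hr]
  refine Finset.sum_nonneg fun w _ => ?_
  rcases (hr.wt.1 w).eq_or_lt with h0 | h0
  · rw [← h0]; simp
  · exact mul_nonneg h0.le (En_nonneg (hr.fb h0))

theorem avg_sm {n : ℕ} {γ : Type*} [Fintype γ] (p : GG n → ℝ) {r : GG n × γ → ℝ} (hr : IsD r) :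
    ∑ w, wt r w * sm p (fb r w) = En p + hh r - ∑ w, wt r w * En (cv p (fb r w)) := by
  unfold sm
  simp only [mul_sub, Finset.sum_sub_distrib, mul_add, Finset.sum_add_distrib]
  rw [avg_const hr.wt, avg_hh hr]

set_option maxHeartbeats 2000000 in
theorem DD {δ0 L0 c0 κ : ℝ} (hδ0 : 0 < δ0) (hδ1 : δ0 ≤ 1 / 2) (hL0 : 0 ≤ L0) (hc0 : 0 < c0)
    (hc1 : c0 < 1) (hκ : 0 < κ) (hB : StatA (1 / 2 - δ0) L0 c0) :
    ∃ ε : ℝ, 0 < ε ∧ ∀ ρ : ℝ, κ ≤ ρ → ρ ≤ 1 / 2 → PA ρ → ∃ L : ℝ, 0 ≤ L ∧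
      ∀ (n : ℕ) (p q : GG n → ℝ), IsD p → IsD q →
      (ρ - 2 * ε) * (En p + En q) ≤ sm p q →
      ∃ f : LL n, ks f ≤ L * (En p + En q) ∧
       (ε / 2 * (En p + En q) ≤ En q - En (mp f q) ∨
        ε / 2 * (En p + En q) ≤ En (cv p q) - En (mp f (cv p q)) ∨
        ε / 2 * (En p + En q) ≤ En (cv q q) - En (mp f (cv q q)) ∨
        ε / 2 * (En p + En q) ≤ En (cv (cv p q) (cv p q)) - En (mp f (cv (cv p q) (cv p q)))) := by
  set M0 := 4 * δ0 / (κ * c0) with hM0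
  have hM0p : 0 < M0 := by positivity
  obtain ⟨ε, hε, e1, e2, e3⟩ : ∃ ε : ℝ, 0 < ε ∧ 3 * ε ≤ κ / 2 ∧
      (24 + 23 * M0) * ε ≤ δ0 * κ / 2 ∧ 3 / 2 * ε ≤ κ ^ 2 * c0 / 16 := by
    refine ⟨min (κ / 6) (min (δ0 * κ / 2 / (24 + 23 * M0)) (κ ^ 2 * c0 / 24)), by positivity, ?_, ?_, ?_⟩
    · have := min_le_left (κ / 6) (min (δ0 * κ / 2 / (24 + 23 * M0)) (κ ^ 2 * c0 / 24))
      linarith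
    · have := (min_le_right (κ / 6) (min (δ0 * κ / 2 / (24 + 23 * M0)) (κ ^ 2 * c0 / 24))).trans
        (min_le_left _ _)
      rw [le_div_iff₀ (by positivity)] at this
      linarith
    · have := (min_le_right (κ / 6) (min (δ0 * κ / 2 / (24 + 23 * M0)) (κ ^ 2 * c0 / 24))).trans
        (min_le_right _ _)
      linarith
  refine ⟨ε, hε, fun ρ hκρ hρ2 hA => ?_⟩
  have hρ : 0 < ρ := by linarith
  obtain ⟨La, hLa, ha⟩ := L3two hA hρ hε one_pos
  obtain ⟨Lb, hLb, hb⟩ := L1 hA hρ.le (ε := ε / 4) (by positivity)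
  obtain ⟨Lc, hLc, hc⟩ := L1 hA hρ.le (ε := ε / 8) (by positivity)
  obtain ⟨Ld, hLd, hd⟩ := L3 hA hρ hε one_pos
  have hLe : 0 ≤ 4 * L0 / ρ := by positivity
  refine ⟨La + 2 * Lb + 4 * Lc + Ld + 4 * L0 / ρ, by positivity, fun n p q hp hq hs => ?_⟩
  have hT := hp.cv hq
  have hTT := hT.cv hT
  have hR := hp.rR hp hq hq
  have hx := En_nonneg hp
  have hy := En_nonneg hq
  have ht := En_nonneg hT
  have htK := En_cv_le hp hq
  have hx2 := En_cv_le hp hp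
  have hy2 := En_cv_le hq hq
  have hS4 := En_cv_le hT hT
  by_contra hcon
  push Not at hcon
  set K := En p + En q with hK
  have hKpos : 0 < K := by
    have := (hcon LinearMap.id (by rw [ks_id]; positivity)).1
    rw [mp_idL] at this
    by_contra hh
    have : ε / 2 * K ≤ 0 := mul_nonpos_of_nonneg_of_nonpos (by positivity) (by linarith)
    linarith
  have mL : ∀ x : ℝ, x ≤ La + 2 * Lb + 4 * Lc + Ld + 4 * L0 / ρ →
      x * K ≤ (La + 2 * Lb + 4 * Lc + Ld + 4 * L0 / ρ) * K :=
    fun x hx => mul_le_mul_of_nonneg_right hx hKpos.le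
  -- (1)
  have n1 : hh (js p p) + hh (js q q) - fs (js p p) (js q q) ≤
      ρ * (hh (js p p) + hh (js q q)) + ε * K := by
    by_contra hh
    push Not at hh
    obtain ⟨f, hf, hf2⟩ := ha n _ _ (js p p) (js q q) K (hp.js hp) (hq.js hq) hKpos.le
      (by rw [fst_js hq]; linarith) hh.le
    rw [fst_js hq] at hf2
    have := (hcon f (hf.trans (mL _ (by linarith)))).1
    linarith
  have n2 : hh (js p q) + hh (js q p) - fs (js p q) (js q p) ≤
      ρ * (hh (js p q) + hh (js q p)) + ε * K := by
    by_contra hh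
    push Not at hh
    obtain ⟨f, hf, hf2⟩ := ha n _ _ (js p q) (js q p) K (hp.js hq) (hq.js hp) hKpos.le
      (by rw [fst_js hp]; linarith) hh.le
    rw [fst_js hp] at hf2
    have := (hcon f (hf.trans (mL _ (by linarith)))).1
    linarith
  have n3 : sm (cv q q) (cv p p) ≤ ρ * (En (cv q q) + En (cv p p)) + ε * K := by
    by_contra hh
    push Not at hh
    obtain ⟨f, hf, hf2⟩ := hb n (cv q q) (cv p p) (2 * K) (hq.cv hq) (hp.cv hp) (by linarith)
      (by linarith)
    have := (hcon f (hf.trans (by rw [← mul_assoc]; exact mL _ (by linarith)))).2.2.1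
    linarith
  have n4 : sm (cv p q) (cv p q) ≤ ρ * (En (cv p q) + En (cv p q)) + ε * K := by
    by_contra hh
    push Not at hh
    obtain ⟨f, hf, hf2⟩ := hb n (cv p q) (cv p q) (2 * K) hT hT (by linarith)
      (by linarith)
    have := (hcon f (hf.trans (by rw [← mul_assoc]; exact mL _ (by linarith)))).2.1
    linarith
  have n5 : sm (cv (cv p q) (cv p q)) (cv (cv p q) (cv p q)) ≤
      ρ * (En (cv (cv p q) (cv p q)) + En (cv (cv p q) (cv p q))) + ε * K := by
    by_contra hh
    push Not at hh
    obtain ⟨f, hf, hf2⟩ := hc n (cv (cv p q) (cv p q)) (cv (cv p q) (cv p q)) (4 * K) hTT hTT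
      (by linarith) (by linarith)
    have := (hcon f (hf.trans (by rw [← mul_assoc]; exact mL _ (by linarith)))).2.2.2
    linarith
  have q0 : JJ p q q p = JJ p p q q := (Q2 hp hp hq hq).symm
  have q1 := Q1 hp hq hq hp
  rw [q0, cv_comm q p] at q1
  have q2 := Q1 hT hT hT hT
  have hhpp : ∀ a b : GG n → ℝ, IsD a → IsD b → hh (js a b) = En a + En b - En (cv a b) := by
    intro a b ha hb
    unfold hh; rw [En_js ha hb, wt_js]
  rw [hhpp _ _ hp hp, hhpp _ _ hq hq, fs_js] at n1
  rw [hhpp _ _ hp hq, hhpp _ _ hq hp, fs_js, q0, cv_comm q p] at n2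
  unfold sm at n3 n4 n5 hs
  rw [cv_comm (cv q q), cv4] at n3
  have hhR : hh (rR p p q q) = JJ p p q q - En (cv p p) - En (cv q q) := by
    unfold hh; rw [wt_rR, En_pr (hp.cv hp) (hq.cv hq)]; unfold JJ; ring
  have hhRle := hh_le hR
  rw [fst_rR hp hp hq hq] at hhRle
  have hhR0 := hh_nonneg hR
  have dl := diag_le hp hq
  have fsR := fs_coarse hR hR (fun z : GG n × GG n => z.1 + z.2) (fun z : GG n × GG n => z.1 + z.2)
  rw [rR_US, fs_js] at fsR
  set R := rR p p q q with hRd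
  have wR := hR.wt
  -- averages
  have avg2 : ∑ u, wt R u * (∑ w, wt R w * sm (fb R u) (fb R w) - ρ * (En (fb R u) + hh R))
      = hh R + hh R - fs R R - ρ * (hh R + hh R) := by
    simp_rw [avg_sm _ hR]
    rw [← fam_cv hR hR]
    simp only [mul_sub, Finset.sum_sub_distrib, mul_add, Finset.sum_add_distrib]
    rw [avg_const wR, avg_hh hR, avg_const wR]
    have : ∑ u, wt R u * (ρ * En (fb R u)) = ρ * hh R := by
      rw [← avg_hh hR, Finset.mul_sum]
      exact Finset.sum_congr rfl fun w _ => by ring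
    rw [this]
  have avg1 : ∑ u, wt R u * (sm (fb R u) (fb R u) - (1 - 2 * δ0) * En (fb R u)) =
      (1 + 2 * δ0) * hh R - ∑ u, wt R u * En (cv (fb R u) (fb R u)) := by
    rw [← avg_hh hR, Finset.mul_sum, ← Finset.sum_sub_distrib]
    refine Finset.sum_congr rfl fun w _ => ?_
    unfold sm; ring
  have t0 := ht
  set t := En (cv p q) with htd
  set S4 := En (cv (cv p q) (cv p q)) with hS4d
  set J := JJ p p q q with hJd
  set x2 := En (cv p p) with hx2d
  set y2 := En (cv q q) with hy2d
  set hU := 2 * t - S4 with hUd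
  have tle : t ≤ (1 - ρ + 2 * ε) * K := by linarith
  have I1 : 2 * t + x2 + y2 - J - S4 ≤ 6 * ε * K := by linarith
  have I2 : 4 * t - J - S4 ≤ 6 * ε * K := by linarith
  have hUlow : κ / 2 * K ≤ hU := by
    have h1 : 2 * (1 - ρ) * (K - t) - ε * K ≤ hU := by linarith
    have h2 : (ρ - 2 * ε) * K ≤ K - t := by linarith
    have h3 : 0 ≤ (1 - 2 * ρ) * (K - t) := mul_nonneg (by linarith) (by linarith)
    have h4 : (κ / 2) * K ≤ (ρ - 3 * ε) * K := mul_le_mul_of_nonneg_right (by linarith) hKpos.le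
    linarith
  have hUup : 2 * ρ * t - 5 * ε * K ≤ hU := by
    linarith
  have hRlow : hU - 6 * ε * K ≤ hh R := by linarith
  have hRlow2 : (1 - ρ) * (hU - 6 * ε * K) ≤ (1 - ρ) * hh R :=
    mul_le_mul_of_nonneg_left hRlow (by linarith)
  have hεK : 0 < ε * K := by positivity
  have hρεK : 0 ≤ ρ * (ε * K) := by positivity
  have g_avg : -(23 * ε * K) ≤ hh R + hh R - fs R R - ρ * (hh R + hh R) := by
    linarith
  have hδR : δ0 * (hU - 6 * ε * K) ≤ δ0 * hh R :=
    mul_le_mul_of_nonneg_left hRlow hδ0.le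
  have hδεK : δ0 * (ε * K) ≤ 1 / 2 * (ε * K) := mul_le_mul_of_nonneg_right hδ1 hεK.le
  have f_avg : 2 * δ0 * hU - 24 * ε * K ≤
      (1 + 2 * δ0) * hh R - ∑ u, wt R u * En (cv (fb R u) (fb R u)) := by
    linarith
  set M := 4 * δ0 / (ρ * c0) with hM
  have hMpos : 0 < M := by positivity
  have hMle : M ≤ M0 := by
    rw [hM, hM0]; gcongr
  have comb : δ0 * hU ≤ ∑ u, wt R u * ((sm (fb R u) (fb R u) - (1 - 2 * δ0) * En (fb R u)) +
      M * (∑ w, wt R w * sm (fb R u) (fb R w) - ρ * (En (fb R u) + hh R))) := by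
    have e : ∑ u, wt R u * ((sm (fb R u) (fb R u) - (1 - 2 * δ0) * En (fb R u)) +
      M * (∑ w, wt R w * sm (fb R u) (fb R w) - ρ * (En (fb R u) + hh R))) =
      ((1 + 2 * δ0) * hh R - ∑ u, wt R u * En (cv (fb R u) (fb R u))) +
       M * (hh R + hh R - fs R R - ρ * (hh R + hh R)) := by
      rw [← avg1, ← avg2, Finset.mul_sum, ← Finset.sum_add_distrib]
      exact Finset.sum_congr rfl fun w _ => by ring
    rw [e]
    have h1 : M * (-(23 * ε * K)) ≤ M * (hh R + hh R - fs R R - ρ * (hh R + hh R)) :=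
      mul_le_mul_of_nonneg_left g_avg hMpos.le
    have h2 : M * (ε * K) ≤ M0 * (ε * K) := mul_le_mul_of_nonneg_right hMle hεK.le
    have h3 : (24 + 23 * M0) * ε * K ≤ δ0 * κ / 2 * K := mul_le_mul_of_nonneg_right e2 hKpos.le
    have h4 : δ0 * (κ / 2 * K) ≤ δ0 * hU := mul_le_mul_of_nonneg_left hUlow hδ0.le
    linarith
  obtain ⟨z, hz, hzc⟩ := exists_of_avg wR comb
  have hRz := hR.fb hz
  set E := En (fb R z) with hE
  have hE0 : 0 ≤ E := En_nonneg hRz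
  set g := ∑ w, wt R w * sm (fb R z) (fb R w) - ρ * (E + hh R) with hg
  set F := sm (fb R z) (fb R z) - (1 - 2 * δ0) * E with hF
  have hTle : En (mp Prod.fst R) ≤ 1 * K := by
    rw [hRd, fst_rR hp hp hq hq]; linarith
  have hg1 : g ≤ ε * K := by
    by_contra hh
    push Not at hh
    obtain ⟨f, hf, hf2⟩ := hd n _ (fb R z) R K hRz hR hKpos.le hTle (by rw [hg] at hh; linarith)
    rw [hRd, fst_rR hp hp hq hq] at hf2
    have := (hcon f (hf.trans (mL _ (by linarith)))).2.1
    linarith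
  have hδU : δ0 * (κ / 2 * K) ≤ δ0 * hU := mul_le_mul_of_nonneg_left hUlow hδ0.le
  have hMg : M * g ≤ δ0 * hU / 2 := by
    have h1 : M * g ≤ M * (ε * K) := mul_le_mul_of_nonneg_left hg1 hMpos.le
    have h2 : M * (ε * K) ≤ M0 * (ε * K) := mul_le_mul_of_nonneg_right hMle hεK.le
    have h3 : (24 + 23 * M0) * ε * K ≤ δ0 * κ / 2 * K := mul_le_mul_of_nonneg_right e2 hKpos.le
    have h4 : 0 ≤ M0 * (ε * K) := by positivity
    linarith
  have hFl : δ0 * hU / 2 ≤ F := by linarith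
  have hUpos : 0 < hU := by
    have : 0 < κ / 2 * K := by positivity
    linarith
  have hFpos : 0 < F := by
    have : 0 < δ0 * hU / 2 := by positivity
    linarith
  have hFup : F ≤ 2 * δ0 * E := by
    have := sm_le_left hRz hRz
    rw [hF]; linarith
  have hElow : hU / 4 ≤ E := by
    have : δ0 * (hU / 4) ≤ δ0 * E := by linarith
    exact le_of_mul_le_mul_left this hδ0
  have hglow : -(ρ * c0 * E / 2) ≤ g := by
    have h1 : -(2 * δ0 * E) ≤ M * g := by
      have : 0 < δ0 * hU := by positivity
      linarith
    have h2 : M * (-(ρ * c0 * E / 2)) = -(2 * δ0 * E) := by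
      rw [hM]; field_simp; ring
    rw [← h2] at h1
    exact le_of_mul_le_mul_left h1 hMpos
  have hEup : ρ * E ≤ 2 * K := by
    have h1 : ∑ w, wt R w * sm (fb R z) (fb R w) ≤ hh R := by
      rw [← avg_hh hR]
      exact avg_le wR fun w hw => sm_le_right hRz (hR.fb hw)
    have h2 : 0 ≤ ρ * hh R := by positivity
    have h3 : ρ * c0 * E ≤ ρ * E := by
      have : 0 ≤ ρ * E := by positivity
      nlinarith
    linarith
  obtain ⟨f, hf, hf2⟩ := hB n (fb R z) (fb R z) hRz hRz (by
    rw [← hE]; linarith)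
  rw [← hE] at hf hf2
  have hfk : ks f ≤ 4 * L0 / ρ * K := by
    have : E ≤ 2 * K / ρ := by rw [le_div_iff₀ hρ]; linarith
    have h2 : L0 * (E + E) ≤ L0 * (2 * K / ρ + 2 * K / ρ) :=
      mul_le_mul_of_nonneg_left (by linarith) hL0
    refine hf.trans (h2.trans (le_of_eq ?_))
    field_simp; ring
  have hcapT := (hcon f (hfk.trans (mL _ (by linarith)))).2.1
  have hfst : mp Prod.fst R = cv p q := by rw [hRd, fst_rR hp hp hq hq]
  have asd := avg_sm_drop f hRz hR
  rw [hfst] at asd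
  have hhle : hh (fmap f R) ≤ hh R := by
    have := En_mp_le hR (fun z : GG n × (GG n × GG n) => (f z.1, z.2))
    unfold hh; rw [wt_fmap]; unfold fmap; linarith
  have hρhh : ρ * hh (fmap f R) ≤ ρ * hh R := mul_le_mul_of_nonneg_left hhle hρ.le
  obtain ⟨g', hg', hg2'⟩ := hd n _ (mp f (fb R z)) (fmap f R) K (hRz.mp _) (hR.fmap f) hKpos.le
    (by rw [fst_fmap, hfst]; linarith [En_mp_le hT f]) (by
      simp_rw [wt_fmap, fb_fmap]
      have h1 : ρ * En (mp f (fb R z)) ≤ ρ * ((1 - c0) * E) :=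
        mul_le_mul_of_nonneg_left (by linarith) hρ.le
      have h2 : ρ * c0 * (hU / 4) ≤ ρ * c0 * E :=
        mul_le_mul_of_nonneg_left hElow (by positivity)
      have h3 : ρ * c0 * (κ / 2 * K) ≤ ρ * c0 * hU :=
        mul_le_mul_of_nonneg_left hUlow (by positivity)
      have h4 : κ * (c0 * (κ / 2 * K)) ≤ ρ * (c0 * (κ / 2 * K)) :=
        mul_le_mul_of_nonneg_right hκρ (by positivity)
      have h5 : 3 / 2 * ε * K ≤ κ ^ 2 * c0 / 16 * K := mul_le_mul_of_nonneg_right e3 hKpos.le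
      have h6 : κ ^ 2 * c0 / 16 * K = κ * (c0 * (κ / 2 * K)) / 8 := by ring
      linarith)
  rw [fst_fmap, hfst] at hg2'
  have := (hcon (g' ∘ₗ f) ((ks_comp g' f).trans (by
    have := mL (Ld + 4 * L0 / ρ) (by linarith)
    linarith))).2.1
  rw [mp_comp] at this
  have h9 := En_mp_le hT f
  linarith

end PF

namespace PF

set_option linter.unusedSectionVars false
set_option linter.unusedVariables false
set_option linter.unusedSimpArgs false

theorem StepA {ρ ε L : ℝ} (hε : 0 < ε) (hL : 0 ≤ L)
    (hD : ∀ (n : ℕ) (p q : GG n → ℝ), IsD p → IsD q →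
      (ρ - 2 * ε) * (En p + En q) ≤ sm p q →
      ∃ f : LL n, ks f ≤ L * (En p + En q) ∧
       (ε / 2 * (En p + En q) ≤ En q - En (mp f q) ∨
        ε / 2 * (En p + En q) ≤ En (cv p q) - En (mp f (cv p q)) ∨
        ε / 2 * (En p + En q) ≤ En (cv q q) - En (mp f (cv q q)) ∨
        ε / 2 * (En p + En q) ≤ En (cv (cv p q) (cv p q)) - En (mp f (cv (cv p q) (cv p q))))) :
    PA (ρ - ε) := by
  obtain ⟨N, hN⟩ := exists_nat_gt (6 / (ε / 4))
  rw [div_lt_iff₀ (by positivity)] at hN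
  set c := min ε (1 / 2) with hc
  have hc0 : 0 < c := by positivity
  have hcε : c ≤ ε := min_le_left _ _
  have hc2 : c ≤ 1 / 2 := min_le_right _ _
  refine ⟨N * L, c, by positivity, hc0, by linarith, fun n p q hp hq hs => ?_⟩
  have hx := En_nonneg hp
  have hy := En_nonneg hq
  set K := En p + En q with hK
  have hK0 : 0 ≤ K := by positivity
  rcases hK0.eq_or_lt with hKz | hKpos
  · refine ⟨LinearMap.id, by rw [ks_id, ← hKz]; simp, ?_⟩
    rw [mp_idL, mp_idL, ← hK, ← hKz]; simp
  have hT := hp.cv hq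
  have key : ∀ j : ℕ, ∃ f : LL n, ks f ≤ j * L * K ∧ (En (mp f p) + En (mp f q) ≤ (1 - c) * K ∨
      En (mp f q) + En (mp f (cv p q)) + En (mp f (cv q q)) + En (mp f (cv (cv p q) (cv p q)))
        ≤ 6 * K - j * (ε / 4 * K)) := by
    intro j
    induction j with
    | zero =>
      refine ⟨LinearMap.id, by rw [ks_id]; simp, Or.inr ?_⟩
      simp only [mp_idL]
      have := En_cv_le hp hq
      have := En_cv_le hq hq
      have := En_cv_le hT hT
      simp only [Nat.cast_zero, zero_mul, sub_zero]
      linarith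
    | succ j ih =>
      obtain ⟨f, hf, h⟩ := ih
      have hLK : 0 ≤ L * K := by positivity
      by_cases h1 : En (mp f p) + En (mp f q) ≤ (1 - c) * K
      · exact ⟨f, by push_cast; nlinarith, Or.inl h1⟩
      have h2 := h.resolve_left h1
      push Not at h1
      have i1 := En_mp_le hp f
      have i2 := En_mp_le hq f
      have hfp := hp.mp f
      have hfq := hq.mp f
      have hfT := hfp.cv hfq
      have hs' : (ρ - 2 * ε) * (En (mp f p) + En (mp f q)) ≤ sm (mp f p) (mp f q) := by
        have hd := dropL f hp hq
        have hn := sm_nonneg hfp hfq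
        have hn1 := En_nonneg hfp
        have hn2 := En_nonneg hfq
        have hcK : c * K ≤ ε * K := mul_le_mul_of_nonneg_right hcε hK0
        rcases le_total (ρ - 2 * ε) 0 with h0 | h0
        · exact (mul_nonpos_of_nonpos_of_nonneg h0 (by linarith)).trans hn
        · have : (ρ - 2 * ε) * (En (mp f p) + En (mp f q)) ≤ (ρ - 2 * ε) * K :=
            mul_le_mul_of_nonneg_left (by linarith) h0
          linarith
      obtain ⟨g, hg, hgc⟩ := hD n (mp f p) (mp f q) hfp hfq hs'
      have hK2 : ε / 4 * K ≤ ε / 2 * (En (mp f p) + En (mp f q)) := by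
        have : c * K ≤ 1 / 2 * K := mul_le_mul_of_nonneg_right hc2 hK0
        have : ε / 2 * (K / 2) ≤ ε / 2 * (En (mp f p) + En (mp f q)) :=
          mul_le_mul_of_nonneg_left (by linarith) (by positivity)
        linarith
      refine ⟨g ∘ₗ f, ?_, Or.inr ?_⟩
      · have := ks_comp g f
        have : L * (En (mp f p) + En (mp f q)) ≤ L * K :=
          mul_le_mul_of_nonneg_left (by linarith) hL
        push_cast; linarith
      · simp only [mp_comp, mp_cvL] at *
        have m1 := En_mp_le hfq g
        have m2 := En_mp_le hfT g
        have m3 := En_mp_le (hfq.cv hfq) g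
        have m4 := En_mp_le (hfT.cv hfT) g
        simp only [mp_cvL] at m1 m2 m3 m4
        push_cast
        rcases hgc with hgc | hgc | hgc | hgc <;> linarith
  obtain ⟨f, hf, h⟩ := key N
  refine ⟨f, hf, h.resolve_right fun h => ?_⟩
  have m1 := En_nonneg (hq.mp f)
  have m2 := En_nonneg (hT.mp f)
  have m3 := En_nonneg ((hq.cv hq).mp f)
  have m4 := En_nonneg ((hT.cv hT).mp f)
  have : 6 * K < N * (ε / 4) * K := mul_lt_mul_of_pos_right hN hKpos
  linarith

theorem PA_all {δ0 : ℝ} (hδ0 : 0 < δ0) (hδ1 : δ0 ≤ 1 / 2) (hB : PA (1 / 2 - δ0)) {η : ℝ}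
    (hη : 0 < η) : PA η := by
  rcases le_total (1 / 2 - δ0) η with h | hle
  · exact hB.mono h
  have hB' := hB
  obtain ⟨L0, c0, hL0, hc0, hc1, hS⟩ := hB
  obtain ⟨ε, hε, hD⟩ := DD hδ0 hδ1 hL0 hc0 hc1 hη hS
  have key : ∀ j : ℕ, PA (max η (1 / 2 - δ0 - j * ε)) := by
    intro j
    induction j with
    | zero => exact hB'.mono (by simp)
    | succ j ih =>
      obtain ⟨L, hL, h⟩ := hD _ (le_max_left _ _) (max_le (by linarith) (by
        have : 0 ≤ j * ε := by positivity
        linarith)) ih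
      refine (StepA hε hL h).mono ?_
      rcases max_cases η (1 / 2 - δ0 - j * ε) with ⟨h1, h2⟩ | ⟨h1, h2⟩
      · rw [h1]; exact le_trans (by linarith) (le_max_left _ _)
      · rw [h1]; refine le_trans ?_ (le_max_right _ _)
        push_cast; linarith
  obtain ⟨N, hN⟩ := exists_nat_gt (1 / 2 / ε)
  rw [div_lt_iff₀ hε] at hN
  refine (key N).mono (max_le le_rfl ?_)
  linarith

end PF

namespace PF

set_option linter.unusedSectionVars false
set_option linter.unusedVariables false
set_option linter.unusedSimpArgs false

section base
variable {G : Type*} [AddCommGroup G] [Module (ZMod 2) G] [Fintype G]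
variable {β γ : Type*} [Fintype β] [Fintype γ]

/-- trivial family -/
def tv (p : G → ℝ) : G × Unit → ℝ := mp (fun a => (a, ())) p

theorem fst_tv (p : G → ℝ) : mp Prod.fst (tv p) = p := by
  unfold tv; rw [mp_mp]; exact mp_id p

theorem tv_apply (p : G → ℝ) (a : G) : tv p (a, ()) = p a :=
  mp_apply_inj (fun a : G => (a, ())) (fun _ _ h => (Prod.mk.inj h).1) p a

theorem wt_tv {p : G → ℝ} (hp : IsD p) (u : Unit) : wt (tv p) u = 1 := by
  rw [wt_eq, ← hp.2]
  exact Finset.sum_congr rfl fun a _ => tv_apply p a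

theorem fb_tv {p : G → ℝ} (hp : IsD p) (u : Unit) : fb (tv p) u = p := by
  funext a
  unfold fb
  rw [wt_tv hp, div_one]
  exact tv_apply p a

theorem fst_jn (r₁ : G × β → ℝ) (r₂ : G × γ → ℝ) :
    mp Prod.fst (jn r₁ r₂) = cv (mp Prod.fst r₁) (mp Prod.fst r₂) := by
  unfold jn cv
  rw [mp_mp, ← mp_pr, mp_mp]

theorem fam_right {r : G × β → ℝ} (hr : IsD r) {p : G → ℝ} (hp : IsD p) :
    ∑ u, wt r u * En (cv (fb r u) p) ≤ En (cv (mp Prod.fst r) p) := by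
  have ht : IsD (tv p) := hp.mp _
  have h1 := fam_cv hr ht
  have h2 := hh_le (hr.jn ht)
  rw [fst_jn, fst_tv] at h2
  have h3 : fs r (tv p) = hh (jn r (tv p)) := by
    unfold fs hh
    rw [wt_jn, En_pr hr.wt ht.wt]; ring
  rw [← h3, ← h1] at h2
  simpa [wt_tv hp, fb_tv hp] using h2

/-- the functional minimised in the base case -/
def tau (p₀ q₀ p q : G → ℝ) : ℝ :=
  En (cv p q) + ((1 / 50) * En (cv p p₀) - (51 / 100) * En p)
    + ((1 / 50) * En (cv q q₀) - (51 / 100) * En q)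

theorem side {r : G × β → ℝ} (hr : IsD r) {p : G → ℝ} (hp : IsD p) :
    ∑ u, wt r u * ((1 / 50) * En (cv (fb r u) p) - (51 / 100) * En (fb r u)) ≤
      (1 / 50) * En (cv (mp Prod.fst r) p) - (51 / 100) * hh r := by
  have h1 := fam_right hr hp
  have h2 := avg_hh hr
  have : ∑ u, wt r u * ((1 / 50) * En (cv (fb r u) p) - (51 / 100) * En (fb r u)) =
      (1 / 50) * ∑ u, wt r u * En (cv (fb r u) p) - (51 / 100) * ∑ u, wt r u * En (fb r u) := by
    rw [Finset.mul_sum, Finset.mul_sum, ← Finset.sum_sub_distrib]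
    exact Finset.sum_congr rfl fun u _ => by ring
  rw [this, h2]; linarith

variable {p₀ q₀ p q : G → ℝ}

theorem avg_min (hp₀ : IsD p₀) (hq₀ : IsD q₀)
    (hmin : ∀ p' q' : G → ℝ, IsD p' → IsD q' → tau p₀ q₀ p q ≤ tau p₀ q₀ p' q')
    {r₁ : G × β → ℝ} {r₂ : G × γ → ℝ} (h₁ : IsD r₁) (h₂ : IsD r₂) :
    tau p₀ q₀ p q ≤ fs r₁ r₂ + ((1 / 50) * En (cv (mp Prod.fst r₁) p₀) - (51 / 100) * hh r₁)
      + ((1 / 50) * En (cv (mp Prod.fst r₂) q₀) - (51 / 100) * hh r₂) := by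
  have a := side h₁ hp₀
  have b := side h₂ hq₀
  set F := fun u => (1 / 50) * En (cv (fb r₁ u) p₀) - (51 / 100) * En (fb r₁ u) with hF
  set H := fun u => (1 / 50) * En (cv (fb r₂ u) q₀) - (51 / 100) * En (fb r₂ u) with hH
  have c : ∑ u, wt r₁ u * ∑ w, wt r₂ w * tau p₀ q₀ (fb r₁ u) (fb r₂ w) =
      fs r₁ r₂ + ∑ u, wt r₁ u * F u + ∑ w, wt r₂ w * H w := by
    have : ∀ u, ∑ w, wt r₂ w * tau p₀ q₀ (fb r₁ u) (fb r₂ w) =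
        ∑ w, wt r₂ w * En (cv (fb r₁ u) (fb r₂ w)) + F u + ∑ w, wt r₂ w * H w := by
      intro u
      rw [← avg_const h₂.wt (F u), ← Finset.sum_add_distrib, ← Finset.sum_add_distrib]
      refine Finset.sum_congr rfl fun w _ => ?_
      simp only [tau, hF, hH]; ring
    simp only [this, mul_add, Finset.sum_add_distrib]
    rw [fam_cv h₁ h₂, avg_const h₁.wt]
  have d : tau p₀ q₀ p q ≤ ∑ u, wt r₁ u * ∑ w, wt r₂ w * tau p₀ q₀ (fb r₁ u) (fb r₂ w) := by
    conv_lhs => rw [← avg_const h₁.wt (tau p₀ q₀ p q)]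
    refine avg_le h₁.wt fun u hu => ?_
    conv_lhs => rw [← avg_const h₂.wt (tau p₀ q₀ p q)]
    exact avg_le h₂.wt fun w hw => hmin _ _ (h₁.fb hu) (h₂.fb hw)
  linarith

theorem avg_min_diag (hp₀ : IsD p₀) (hq₀ : IsD q₀)
    (hmin : ∀ p' q' : G → ℝ, IsD p' → IsD q' → tau p₀ q₀ p q ≤ tau p₀ q₀ p' q')
    {r : G × β → ℝ} (h₁ : IsD r) :
    tau p₀ q₀ p q ≤ ∑ z, wt r z * En (cv (fb r z) (fb r z))
      + ((1 / 50) * En (cv (mp Prod.fst r) p₀) - (51 / 100) * hh r)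
      + ((1 / 50) * En (cv (mp Prod.fst r) q₀) - (51 / 100) * hh r) := by
  have a := side h₁ hp₀
  have b := side h₁ hq₀
  have c : ∑ u, wt r u * tau p₀ q₀ (fb r u) (fb r u) =
      ∑ z, wt r z * En (cv (fb r z) (fb r z))
      + ∑ u, wt r u * ((1 / 50) * En (cv (fb r u) p₀) - (51 / 100) * En (fb r u))
      + ∑ u, wt r u * ((1 / 50) * En (cv (fb r u) q₀) - (51 / 100) * En (fb r u)) := by
    rw [← Finset.sum_add_distrib, ← Finset.sum_add_distrib]
    refine Finset.sum_congr rfl fun w _ => ?_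
    simp only [tau]; ring
  have d : tau p₀ q₀ p q ≤ ∑ u, wt r u * tau p₀ q₀ (fb r u) (fb r u) := by
    conv_lhs => rw [← avg_const h₁.wt (tau p₀ q₀ p q)]
    exact avg_le h₁.wt fun u hu => hmin _ _ (h₁.fb hu) (h₁.fb hu)
  linarith

theorem kzero (hp₀ : IsD p₀) (hq₀ : IsD q₀) (hp : IsD p) (hq : IsD q)
    (hmin : ∀ p' q' : G → ℝ, IsD p' → IsD q' → tau p₀ q₀ p q ≤ tau p₀ q₀ p' q') :
    En (cv p q) - En p / 2 - En q / 2 ≤ 0 := by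
  have hT := hp.cv hq
  have ex := En_le_cv_left hp hq
  have ey := En_le_cv_right hp hq
  have kx2 : En (cv p p) + En q ≤ 2 * En (cv p q) := by
    have h1 := KV hp hq hp
    have h2 := En_le_cv_left (hp.cv hp) hq
    rw [cv_assoc, cv_comm p q, ← cv_assoc] at h2
    rw [cv_comm q p] at h1
    have : cv (cv p q) p = cv (cv p p) q := by rw [cv_assoc, cv_comm q p, ← cv_assoc]
    have h3 := En_le_cv_left (hp.cv hp) hq
    rw [this] at h1
    linarith
  have ky2 : En (cv q q) + En p ≤ 2 * En (cv p q) := by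
    have h1 := KV hq hp hq
    have : cv (cv q p) q = cv (cv q q) p := by rw [cv_assoc, cv_comm p q, ← cv_assoc]
    have h3 := En_le_cv_left (hq.cv hq) hp
    rw [this, cv_comm q p] at h1
    linarith
  have kTp : En (cv (cv p q) p) + En q ≤ 2 * En (cv p q) := by
    have h1 := KV hp hq hp
    rw [cv_comm q p] at h1
    linarith
  have kS : En (cv (cv p q) (cv p q)) + En p ≤ En (cv (cv p q) p) + En (cv p q) := by
    have h1 := KV hT hp hq
    rw [cv_assoc (cv p q)] at h1
    exact h1
  have kpp0 := KV hp hp hp₀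
  have kqq0 := KV hq hq hq₀
  have kTp0 := KV hq hp hp₀
  rw [cv_comm q p] at kTp0
  have kTq0 := KV hp hq hq₀
  have a := hmin _ _ (hp.cv hp) (hq.cv hq)
  have c := hmin _ _ hT hT
  have b := avg_min hp₀ hq₀ hmin (hp.js hp) (hq.js hq)
  have d := avg_min hp₀ hq₀ hmin (hp.js hq) (hq.js hp)
  have e := avg_min_diag hp₀ hq₀ hmin (hp.rR hp hq hq)
  have dl := diag_le hp hq
  simp only [hh, fst_js, fst_rR, fs_js, hp, hq, En_js, wt_js, wt_rR, En_pr (hp.cv hp) (hq.cv hq)] at b d e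
  rw [← Q2 hp hp hq hq, cv_comm q p] at d
  have eR : En (rR p p q q) = JJ p p q q := rfl
  rw [eR] at e
  rw [wt_rR] at dl
  simp only [tau] at a b c d e
  rw [cv4] at a
  linarith

end base
end PF

namespace PF

set_option linter.unusedSectionVars false
set_option linter.unusedVariables false
set_option linter.unusedSimpArgs false

section base2
variable {G : Type*} [AddCommGroup G] [Fintype G]

theorem cv_apply (p q : G → ℝ) (z : G) : cv p q z = ∑ x, p x * q (z - x) := by
  classical
  unfold cv mp pr
  rw [Fintype.sum_prod_type]
  refine Finset.sum_congr rfl fun x _ => ?_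
  rw [Finset.sum_eq_single (z - x)]
  · simp
  · intro y _ hy
    simp only
    rw [if_neg]
    intro h
    exact hy (by rw [← h]; abel)
  · simp

theorem En_cont {X : Type*} [TopologicalSpace X] {F : X → G → ℝ} (hF : ∀ g, Continuous fun x => F x g) :
    Continuous fun x => En (F x) := by
  unfold En
  exact continuous_finsetSum _ fun g _ => continuous_negMulLog.comp (hF g)

theorem cv_cont {X : Type*} [TopologicalSpace X] {F H : X → G → ℝ} (hF : ∀ g, Continuous fun x => F x g)
    (hH : ∀ g, Continuous fun x => H x g) : ∀ g, Continuous fun x => cv (F x) (H x) g := by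
  intro g
  simp only [cv_apply]
  exact continuous_finsetSum _ fun y _ => (hF _).mul (hH _)

theorem exists_min {p₀ q₀ : G → ℝ} (hp₀ : IsD p₀) (hq₀ : IsD q₀) :
    ∃ p q : G → ℝ, IsD p ∧ IsD q ∧
      ∀ p' q' : G → ℝ, IsD p' → IsD q' → tau p₀ q₀ p q ≤ tau p₀ q₀ p' q' := by
  have hc : IsCompact ((stdSimplex ℝ G) ×ˢ (stdSimplex ℝ G)) :=
    (isCompact_stdSimplex ℝ G).prod (isCompact_stdSimplex ℝ G)
  have h1 : ∀ g, Continuous fun x : (G → ℝ) × (G → ℝ) => x.1 g := fun g => by fun_prop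
  have h2 : ∀ g, Continuous fun x : (G → ℝ) × (G → ℝ) => x.2 g := fun g => by fun_prop
  have hf : Continuous fun x : (G → ℝ) × (G → ℝ) => tau p₀ q₀ x.1 x.2 := by
    unfold tau
    have a := En_cont (cv_cont h1 h2)
    have b := En_cont (cv_cont h1 (H := fun _ => p₀) (fun g => continuous_const))
    have c := En_cont (cv_cont h2 (H := fun _ => q₀) (fun g => continuous_const))
    have d := En_cont h1
    have e := En_cont h2
    fun_prop
  obtain ⟨x, hx, hm⟩ := hc.exists_isMinOn ⟨(p₀, q₀), ⟨hp₀, hq₀⟩⟩ hf.continuousOn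
  exact ⟨x.1, x.2, hx.1, hx.2, fun p' q' hp hq => hm (a := (p', q')) ⟨hp, hq⟩⟩

theorem cv_eq {p q : G → ℝ} (hp : IsD p) (hq : IsD q) (h : En (cv p q) ≤ En q) (x x' : G)
    (hx : p x ≠ 0) (hx' : p x' ≠ 0) (z : G) : q (z - x) = q (z - x') := by
  have e1 : En q = ∑ z, ∑ x, p x * negMulLog (q (z - x)) := by
    rw [Finset.sum_comm]
    have : ∀ x, ∑ z, p x * negMulLog (q (z - x)) = p x * En q := by
      intro x
      rw [← Finset.mul_sum]
      congr 1
      exact (Equiv.subRight x).sum_comp (fun z => negMulLog (q z))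
    simp only [this]
    rw [avg_const hp]
  have le : ∀ z ∈ Finset.univ, ∑ x, p x * negMulLog (q (z - x)) ≤ negMulLog (cv p q z) := by
    intro z _
    rw [cv_apply]
    have := strictConcaveOn_negMulLog.concaveOn.le_map_sum (t := Finset.univ) (w := p)
      (p := fun x => q (z - x)) (fun i _ => hp.1 i) hp.2 (fun i _ => hq.1 _)
    simpa using this
  have eq : ∑ z, ∑ x, p x * negMulLog (q (z - x)) = ∑ z, negMulLog (cv p q z) := by
    refine le_antisymm (Finset.sum_le_sum le) ?_
    rw [← e1]; exact h
  have eqz := (Finset.sum_eq_sum_iff_of_le le).1 eq z (Finset.mem_univ z)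
  rw [cv_apply] at eqz
  have key := (strictConcaveOn_negMulLog.map_sum_eq_iff_of_nonneg (t := Finset.univ) (w := p)
      (p := fun x => q (z - x)) (fun i _ => hp.1 i) hp.2 (fun i _ => hq.1 _)).1
      (by simpa using eqz.symm)
  exact key (Finset.mem_univ x) hx (Finset.mem_univ x') hx'

end base2

/-- symmetry subspace -/
def symV {n : ℕ} (q : GG n → ℝ) : Submodule (ZMod 2) (GG n) where
  carrier := {v | ∀ z, q (z + v) = q z}
  zero_mem' := by intro z; rw [add_zero]
  add_mem' := by
    intro a b ha hb z
    rw [← add_assoc, hb, ha]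
  smul_mem' := by
    intro c v hv
    have hc : c = 0 ∨ c = 1 := by revert c; decide
    rcases hc with rfl | rfl
    · intro z; rw [zero_smul, add_zero]
    · rw [one_smul]; exact hv

theorem exists_ker {n : ℕ} (V : Submodule (ZMod 2) (GG n)) : ∃ f : LL n, LinearMap.ker f = V := by
  obtain ⟨W, hW⟩ := V.exists_isCompl
  exact ⟨Submodule.projection W V hW.symm, by simp⟩

theorem ks_eq {n : ℕ} (f : LL n) : ks f = log (Nat.card (LinearMap.ker f)) := by
  unfold ks
  rw [Module.natCard_eq_pow_finrank (K := ZMod 2)]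
  simp

theorem ks_le_En {n : ℕ} {q : GG n → ℝ} (hq : IsD q) (f : LL n) (hf : LinearMap.ker f = symV q) :
    ks f ≤ En q := by
  classical
  rw [ks_eq, hf]
  set N : ℝ := ((Nat.card (symV q) : ℕ) : ℝ) with hN
  have hNpos : 0 < N := by
    rw [hN]; exact_mod_cast Nat.card_pos
  have hle : ∀ z, q z * N ≤ 1 := by
    intro z
    have h1 : ∑ v : symV q, q (z + v) ≤ ∑ w, q w := by
      rw [← Finset.sum_image (s := Finset.univ) (g := fun v : symV q => z + (v : GG n)) (f := q)]
      · exact Finset.sum_le_sum_of_subset_of_nonneg (Finset.subset_univ _) fun i _ _ => hq.1 i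
      · intro a _ b _ hab
        exact Subtype.ext (add_left_cancel hab)
    have h2 : ∑ v : symV q, q (z + v) = N * q z := by
      rw [Finset.sum_congr rfl fun v _ => v.2 z]
      rw [Finset.sum_const, nsmul_eq_mul, hN, Nat.card_eq_fintype_card]; simp
    rw [h2, hq.2] at h1
    linarith
  rw [En_eq, ← avg_const hq (log N), ← Finset.sum_neg_distrib]
  refine Finset.sum_le_sum fun z _ => ?_
  rcases (hq.1 z).eq_or_lt with h0 | h0
  · rw [← h0]; simp
  · rw [← mul_neg]
    refine mul_le_mul_of_nonneg_left ?_ h0.le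
    have := Real.log_nonpos (by positivity) (hle z)
    rw [Real.log_mul h0.ne' hNpos.ne'] at this
    linarith

theorem En_zero {n : ℕ} {p : GG n → ℝ} (hp : IsD p) (f : LL n)
    (h : ∀ x x', p x ≠ 0 → p x' ≠ 0 → f x = f x') : En (mp f p) = 0 := by
  classical
  rw [En_mp_eq, neg_eq_zero]
  refine Finset.sum_eq_zero fun a _ => ?_
  by_cases ha : p a = 0
  · simp [ha]
  · have : mp f p (f a) = 1 := by
      unfold mp
      rw [← hp.2]
      refine Finset.sum_congr rfl fun b _ => ?_
      by_cases hb : p b = 0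
      · simp [hb]
      · rw [if_pos (h b a hb ha)]
    rw [this]; simp

theorem PA_base : PA (1 / 2 - 1 / 1000) := by
  refine ⟨2, 1 / 10, by norm_num, by norm_num, by norm_num, ?_⟩
  intro n p₀ q₀ hp₀ hq₀ hs
  obtain ⟨p, q, hp, hq, hmin⟩ := exists_min hp₀ hq₀
  have hk := kzero hp₀ hq₀ hp hq hmin
  have ex := En_le_cv_left hp hq
  have ey := En_le_cv_right hp hq
  obtain ⟨f, hf⟩ := exists_ker (symV q)
  have hks := ks_le_En hq f hf
  have hz : En (mp f p) = 0 := by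
    refine En_zero hp f fun x x' hx hx' => ?_
    have : x - x' ∈ LinearMap.ker f := by
      rw [hf]
      intro z
      have := cv_eq hp hq (by linarith) x x' hx hx' (z + x)
      rw [add_sub_cancel_right] at this
      rw [this]; congr 1; abel
    rw [LinearMap.mem_ker, map_sub, sub_eq_zero] at this
    exact this
  have hc := hmin q₀ p₀ hq₀ hp₀
  have h1 := En_le_cv_right hq hq₀
  have h1' := En_le_cv_left hq hq₀
  have h2 := En_le_cv_right hp hp₀
  have h2' := En_le_cv_left hp hp₀
  have d := dropL f hp₀ hp
  have d2 := sm_le_right (hp₀.mp f) (hp.mp f)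
  rw [hz] at d2
  have h3 := sm_le_left hp₀ hq₀
  have h4 := sm_le_right hp₀ hq₀
  have h5 := En_mp_le hq₀ f
  have n1 := En_nonneg hp₀
  have n2 := En_nonneg hq₀
  refine ⟨f, ?_, ?_⟩
  · simp only [tau, sm] at *
    rw [cv_comm q₀ p₀] at hc
    linarith
  · simp only [tau, sm] at *
    rw [cv_comm q₀ p₀] at hc
    rw [cv_comm p₀ p] at d
    linarith

end PF

namespace PF

set_option linter.unusedSectionVars false
set_option linter.unusedVariables false
set_option linter.unusedSimpArgs false

theorem iterA {ρ L c : ℝ} (hρ : 0 ≤ ρ) (hL : 0 ≤ L) (hc1 : c < 1) (hA : StatA ρ L c)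
    {n : ℕ} {p : GG n → ℝ} (hp : IsD p) (N : ℕ) :
    ∃ f : LL n, ks f ≤ N * (2 * L * En p) ∧
      (sm (mp f p) (mp f p) ≤ 2 * ρ * En p ∨ En (mp f p) ≤ (1 - c) ^ N * En p) := by
  induction N with
  | zero => exact ⟨LinearMap.id, by rw [ks_id]; simp, Or.inr (by rw [mp_idL]; simp)⟩
  | succ N ih =>
    obtain ⟨f, hk, hf⟩ := ih
    have hE := En_nonneg hp
    have hEf := En_mp_le hp f
    by_cases h : sm (mp f p) (mp f p) ≤ 2 * ρ * En p
    · refine ⟨f, ?_, Or.inl h⟩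
      have : 0 ≤ 2 * L * En p := by positivity
      push_cast
      linarith
    · have h2 := hf.resolve_left h
      push Not at h
      obtain ⟨g, hg, hg2⟩ := hA n _ _ (hp.mp f) (hp.mp f) (by nlinarith)
      refine ⟨g ∘ₗ f, ?_, Or.inr ?_⟩
      · have := ks_comp g f
        have : L * (En (mp f p) + En (mp f p)) ≤ 2 * L * En p := by nlinarith
        push_cast
        linarith
      · rw [mp_comp, pow_succ]
        have : (1 - c) * En (mp f p) ≤ (1 - c) * ((1 - c) ^ N * En p) :=
          mul_le_mul_of_nonneg_left h2 (by linarith)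
        linarith

theorem En_supp {α : Type*} [Fintype α] {r : α → ℝ} (hr : IsD r) (S : Finset α) (hS : S.Nonempty)
    (h : ∀ a, a ∉ S → r a = 0) : En r ≤ log S.card := by
  classical
  have hN : (0 : ℝ) < S.card := by exact_mod_cast hS.card_pos
  have hs : ∑ a ∈ S, r a = 1 := by
    rw [← hr.2]
    exact Finset.sum_subset (Finset.subset_univ S) fun a _ ha => h a ha
  have e : En r = ∑ a ∈ S, negMulLog (r a) := by
    unfold En
    exact (Finset.sum_subset (Finset.subset_univ S) fun a _ ha => by rw [h a ha]; simp).symm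
  have hb : ∀ a ∈ S, negMulLog (r a) ≤ r a * log S.card + ((S.card : ℝ)⁻¹ - r a) := by
    intro a _
    rcases (hr.1 a).eq_or_lt with h0 | h0
    · rw [← h0]; simp
    · have := Real.log_le_sub_one_of_pos (show 0 < (r a * S.card)⁻¹ by positivity)
      rw [Real.log_inv, Real.log_mul h0.ne' hN.ne'] at this
      have h3 := mul_le_mul_of_nonneg_left this h0.le
      have h4 : r a * ((r a * S.card)⁻¹ - 1) = (S.card : ℝ)⁻¹ - r a := by
        field_simp
      rw [h4] at h3
      unfold negMulLog
      linarith
  rw [e]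
  refine (Finset.sum_le_sum hb).trans ?_
  rw [Finset.sum_add_distrib, Finset.sum_sub_distrib, ← Finset.sum_mul, hs, Finset.sum_const,
    nsmul_eq_mul, mul_inv_cancel₀ hN.ne']
  linarith

/-- uniform distribution -/
def un {n : ℕ} (A : Finset (GG n)) : GG n → ℝ := fun a => if a ∈ A then (A.card : ℝ)⁻¹ else 0

section unif
variable {n : ℕ} {A : Finset (GG n)}

theorem un_sum (F : GG n → ℝ) : ∑ a, un A a * F a = (A.card : ℝ)⁻¹ * ∑ a ∈ A, F a := by
  classical
  unfold un
  simp only [ite_mul, zero_mul]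
  rw [Finset.sum_ite_mem, Finset.univ_inter, Finset.mul_sum]

theorem IsD_un (hA : A.Nonempty) : IsD (un A) := by
  constructor
  · intro a
    unfold un
    split_ifs <;> positivity
  · have := un_sum (A := A) (fun _ => 1)
    simp only [mul_one] at this
    rw [this, Finset.sum_const, nsmul_eq_mul, mul_one, inv_mul_cancel₀]
    exact_mod_cast hA.card_pos.ne'

theorem En_un (hA : A.Nonempty) : En (un A) = log A.card := by
  have hN : (A.card : ℝ) ≠ 0 := by exact_mod_cast hA.card_pos.ne'
  rw [En_eq, un_sum (fun a => log (un A a)), Finset.sum_congr rfl (g := fun _ => - log (A.card : ℝ))]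
  · rw [Finset.sum_const, nsmul_eq_mul]
    field_simp
  · intro a ha
    unfold un
    rw [if_pos ha, Real.log_inv]

theorem En_cv_un (hA : A.Nonempty) : En (cv (un A) (un A)) ≤ log (A + A).card := by
  classical
  have hd := IsD_un hA
  refine En_supp (hd.cv hd) (A + A) (hA.add hA) fun z hz => ?_
  rw [cv_apply]
  refine Finset.sum_eq_zero fun x _ => ?_
  unfold un
  by_cases hx : x ∈ A
  · by_cases hy : z - x ∈ A
    · exfalso
      apply hz
      have := Finset.add_mem_add hx hy
      rwa [add_sub_cancel] at this
    · rw [if_neg hy, mul_zero]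
  · rw [if_neg hx, zero_mul]

theorem mp_un (f : LL n) (a : GG n) :
    mp f (un A) (f a) = (A.card : ℝ)⁻¹ *
      (((A : Set (GG n)) ∩ ((LinearMap.ker f : Set (GG n)) + {a})).ncard : ℝ) := by
  classical
  have e : (A : Set (GG n)) ∩ ((LinearMap.ker f : Set (GG n)) + {a}) =
      ((A.filter fun b => f b = f a : Finset (GG n)) : Set (GG n)) := by
    ext b
    simp only [Set.mem_inter_iff, Finset.mem_coe, Finset.mem_filter, Set.add_singleton,
      Set.mem_image, SetLike.mem_coe, LinearMap.mem_ker]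
    refine and_congr_right fun _ => ⟨?_, ?_⟩
    · rintro ⟨v, hv, rfl⟩
      rw [map_add, hv, zero_add]
    · intro h
      exact ⟨b - a, by rw [map_sub, h, sub_self], by abel⟩
  rw [e, Set.ncard_coe_finset]
  have h := un_sum (A := A) (fun b => if f b = f a then (1 : ℝ) else 0)
  rw [← Finset.sum_filter, Finset.sum_const, nsmul_eq_mul, mul_one] at h
  rw [← h]
  unfold mp
  refine Finset.sum_congr rfl fun b _ => ?_
  split_ifs <;> simp

theorem avg_log (hA : A.Nonempty) (f : LL n) :
    (A.card : ℝ)⁻¹ * ∑ a ∈ A,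
        log (((A : Set (GG n)) ∩ ((LinearMap.ker f : Set (GG n)) + {a})).ncard) =
      En (un A) - En (mp f (un A)) := by
  have hN : (A.card : ℝ) ≠ 0 := by exact_mod_cast hA.card_pos.ne'
  rw [En_mp_eq, un_sum (fun a => log (mp f (un A) (f a)))]
  have : ∑ a ∈ A, log (mp f (un A) (f a)) = ∑ a ∈ A,
        log (((A : Set (GG n)) ∩ ((LinearMap.ker f : Set (GG n)) + {a})).ncard)
        - A.card * log A.card := by
    rw [← nsmul_eq_mul, ← Finset.sum_const, ← Finset.sum_sub_distrib]
    refine Finset.sum_congr rfl fun a ha => ?_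
    have hne : ((((A : Set (GG n)) ∩ ((LinearMap.ker f : Set (GG n)) + {a})).ncard : ℕ) : ℝ) ≠ 0 := by
      have : 0 < ((A : Set (GG n)) ∩ ((LinearMap.ker f : Set (GG n)) + {a})).ncard := by
        rw [Set.ncard_pos]
        refine ⟨a, ha, ?_⟩
        rw [Set.add_singleton]
        exact ⟨0, Submodule.zero_mem _, zero_add a⟩
      exact_mod_cast this.ne'
    rw [mp_un, Real.log_mul (inv_ne_zero hN) hne, Real.log_inv]
    ring
  rw [this, En_un hA]
  field_simp
  ring

end unif

theorem final (ε : ℝ) (hε : 0 < ε) : ∃ L : ℝ, 0 < L ∧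
      ∀ (n : ℕ) (A : Finset (GG n)), A.Nonempty →
        ∀ η : ℝ, ((A + A).card : ℝ) = (A.card : ℝ) ^ (2 - η) →
          ∃ V : Submodule (ZMod 2) (GG n),
            (Nat.card V : ℝ) ≤ (A.card : ℝ) ^ L ∧
            (A.card : ℝ)⁻¹ *
                ∑ a ∈ A, Real.log (((A : Set (GG n)) ∩ ((V : Set (GG n)) + {a})).ncard) ≥
              (η - ε) * Real.log A.card := by
  obtain ⟨L, c, hL, hc, hc1, hA⟩ := PA_all (δ0 := 1 / 1000) (by norm_num) (by norm_num) PA_base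
    (half_pos hε)
  obtain ⟨N, hN⟩ := exists_pow_lt_of_lt_one hε (show 1 - c < 1 by linarith)
  refine ⟨N * (2 * L) + 1, by positivity, fun n A hne η hη => ?_⟩
  have hd := IsD_un hne
  obtain ⟨f, hk, hf⟩ := iterA (half_pos hε).le hL hc1 hA hd N
  have hK := En_nonneg hd
  have hcard : (0 : ℝ) < A.card := by exact_mod_cast hne.card_pos
  refine ⟨LinearMap.ker f, ?_, ?_⟩
  · have hV : (0 : ℝ) < Nat.card (LinearMap.ker f) := by exact_mod_cast Nat.card_pos
    rw [← Real.log_le_log_iff hV (by positivity), ← ks_eq, Real.log_rpow hcard, ← En_un hne]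
    linarith
  · rw [avg_log hne, ← En_un hne, ge_iff_le]
    have h1 := En_cv_un hne
    rw [hη, Real.log_rpow hcard, ← En_un hne] at h1
    have h2 := dropL f hd hd
    have h3 : sm (mp f (un A)) (mp f (un A)) ≤ ε * En (un A) := by
      rcases hf with h | h
      · linarith
      · have a := sm_le_left (hd.mp f) (hd.mp f)
        have b : (1 - c) ^ N * En (un A) ≤ ε * En (un A) := mul_le_mul_of_nonneg_right hN.le hK
        linarith
    unfold sm at h2 h3
    linarith

end PF

/-- For all `ε > 0` there is `L > 0` such that for any finite nonempty
`A ⊆ 𝔽₂ⁿ` with `|A+A| = |A|^(2−η)`, there is a subspace `V` with `|V| ≤ |A|^L` and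
`𝔼_{a ∈ A} log |A ∩ (V + a)| ≥ (η − ε) log |A|`. -/
theorem statement0 :
    ∀ ε : ℝ, 0 < ε → ∃ L : ℝ, 0 < L ∧
      ∀ (n : ℕ) (A : Finset (Fvec n)), A.Nonempty →
        ∀ η : ℝ, ((A + A).card : ℝ) = (A.card : ℝ) ^ (2 - η) →
          ∃ V : Submodule (ZMod 2) (Fvec n),
            (Nat.card V : ℝ) ≤ (A.card : ℝ) ^ L ∧
            (A.card : ℝ)⁻¹ *
                ∑ a ∈ A, Real.log (((A : Set (Fvec n)) ∩ ((V : Set (Fvec n)) + {a})).ncard) ≥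
              (η - ε) * Real.log A.card := by
  intro ε hε
  exact PF.final ε hε
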